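/- arXiv:1901.03458 — 14 statements merged into one kernel-verified Lean document; each statement's English description precedes it below -/
import Mathlib

section
/- Let X be a topological space, h : X → ℝ a continuous function, and A ⊆ X a closed subset. Assume that for every c ∈ ℝ the level set h⁻¹({c}) is preconnected, and that for every c ∈ ℝ the set h⁻¹({c}) ∩ ∂A is preconnected, where ∂A denotes the frontier of A. Then for every c ∈ ℝ the set h⁻¹({c}) ∩ A is preconnected. -/
theorem level_aux {X : Type*} [TopologicalSpace X] (L A t t' : Set X) (hA : IsClosed A)
    (hL : IsPreconnected L) (ht : IsClosed t) (ht' : IsClosed t')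
    (hc : L ∩ A ⊆ t ∪ t') (h1 : (L ∩ A ∩ t).Nonempty) (h2 : (L ∩ A ∩ t').Nonempty)
    (hF : ¬ ((L ∩ frontier A) ∩ t').Nonempty) : (L ∩ A ∩ (t ∩ t')).Nonempty := by
  obtain ⟨x, ⟨xL, xA⟩, xt⟩ := h1
  obtain ⟨y, ⟨yL, yA⟩, yt⟩ := h2
  obtain ⟨z, zL, ⟨zt', zA⟩, hz⟩ := isPreconnected_closed_iff.1 hL (t' ∩ A) (t ∪ closure Aᶜ)
    (ht'.inter hA) (ht.union isClosed_closure)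
    (by
      intro w wL
      by_cases wA : w ∈ A
      · rcases hc ⟨wL, wA⟩ with h | h
        · exact Or.inr (Or.inl h)
        · exact Or.inl ⟨h, wA⟩
      · exact Or.inr (Or.inr (subset_closure wA)))
    ⟨y, yL, yt, yA⟩ ⟨x, xL, Or.inl xt⟩
  rcases hz with hz | hz
  · exact ⟨z, ⟨zL, zA⟩, hz, zt'⟩
  · refine absurd ⟨z, ⟨zL, ?_⟩, zt'⟩ hF
    rw [frontier_eq_closure_inter_closure]
    exact ⟨subset_closure zA, hz⟩

/-- Part (1) of the point-set topology lemma: if a continuous real-valued function has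
preconnected level sets, and its level sets intersected with the frontier of a closed set `A`
are preconnected, then its level sets intersected with `A` are preconnected. -/
theorem level_sets_preconnected_on_closed_subset
    {X : Type*} [TopologicalSpace X] (h : X → ℝ) (hcont : Continuous h)
    (A : Set X) (hA : IsClosed A)
    (hlev : ∀ c : ℝ, IsPreconnected (h ⁻¹' {c}))
    (hbd : ∀ c : ℝ, IsPreconnected (h ⁻¹' {c} ∩ frontier A)) :
    ∀ c : ℝ, IsPreconnected (h ⁻¹' {c} ∩ A) := by
  intro c
  rw [isPreconnected_closed_iff]
  intro t t' ht ht' hc h1 h2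
  have hFA : frontier A ⊆ A := hA.frontier_subset
  by_cases hF' : ((h ⁻¹' {c} ∩ frontier A) ∩ t').Nonempty
  · by_cases hF : ((h ⁻¹' {c} ∩ frontier A) ∩ t).Nonempty
    · obtain ⟨z, ⟨zL, zF⟩, hz⟩ := isPreconnected_closed_iff.1 (hbd c) t t' ht ht'
        (fun w hw => hc ⟨hw.1, hFA hw.2⟩) hF hF'
      exact ⟨z, ⟨zL, hFA zF⟩, hz⟩
    · rw [Set.inter_comm t t']
      exact level_aux _ A t' t hA (hlev c) ht' ht (by rwa [Set.union_comm]) h2 h1 hF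
  · exact level_aux _ A t t' hA (hlev c) ht ht' hc h1 h2 hF'
end

section
/- Let μ₁, μ₂, μ₃ be real numbers, each different from 1, satisfying the fixed point formula 1/(1−μ₁) + 1/(1−μ₂) + 1/(1−μ₃) = 1. If not all three of μ₁, μ₂, μ₃ are negative (i.e., at most two of them are < 0), then there exists i ∈ {1,2,3} with |μᵢ| < 1. -/
/-- If three real multipliers, all different from 1, satisfy the fixed point formula and
not all three are negative, then one of them has absolute value less than 1. -/
theorem exists_attracting_multiplier
    (μ₁ μ₂ μ₃ : ℝ) (h₁ : μ₁ ≠ 1) (h₂ : μ₂ ≠ 1) (h₃ : μ₃ ≠ 1)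
    (hfix : 1 / (1 - μ₁) + 1 / (1 - μ₂) + 1 / (1 - μ₃) = 1)
    (hneg : ¬ (μ₁ < 0 ∧ μ₂ < 0 ∧ μ₃ < 0)) :
    |μ₁| < 1 ∨ |μ₂| < 1 ∨ |μ₃| < 1 := by
  by_contra hc
  push Not at hc
  obtain ⟨a, b, c⟩ := hc
  have key : ∀ x : ℝ, x ≠ 1 → 1 ≤ |x| →
      1 / (1 - x) ≤ 1 / 2 ∧ (0 ≤ x → 1 / (1 - x) < 0) := by
    intro x hx hx1
    rcases le_abs.mp hx1 with h | h
    · have hlt : 1 < x := lt_of_le_of_ne h (Ne.symm hx)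
      have hn : 1 / (1 - x) < 0 := one_div_neg.mpr (by linarith)
      exact ⟨by linarith, fun _ => hn⟩
    · exact ⟨one_div_le_one_div_of_le (by norm_num) (by linarith), fun h0 => by linarith⟩
  obtain ⟨k1, n1⟩ := key _ h₁ a
  obtain ⟨k2, n2⟩ := key _ h₂ b
  obtain ⟨k3, n3⟩ := key _ h₃ c
  apply hneg
  refine ⟨?_, ?_, ?_⟩
  · by_contra h
    linarith [n1 (not_lt.mp h)]
  · by_contra h
    linarith [n2 (not_lt.mp h)]
  · by_contra h
    linarith [n3 (not_lt.mp h)]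
end

section
/- Let μ₁, μ₂, μ₃ be real numbers, each different from 1, satisfying the fixed point formula 1/(1−μ₁) + 1/(1−μ₂) + 1/(1−μ₃) = 1. If at most one of μ₁, μ₂, μ₃ is negative, then there exists i ∈ {1,2,3} with 0 ≤ μᵢ < 1. -/
lemma aux_neg (x : ℝ) (h : x ≠ 1) (h0 : 0 ≤ x) (hn : ¬ (0 ≤ x ∧ x < 1)) : 1 / (1 - x) < 0 := by
  have h1 : 1 ≤ x := by
    by_contra hc
    exact hn ⟨h0, not_le.mp hc⟩
  have h2 : 1 < x := lt_of_le_of_ne h1 (Ne.symm h)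
  exact one_div_neg.mpr (by linarith)

lemma aux_lt (x : ℝ) (h : x ≠ 1) (hn : ¬ (0 ≤ x ∧ x < 1)) : 1 / (1 - x) < 1 := by
  by_cases h0 : 0 ≤ x
  · linarith [aux_neg x h h0 hn]
  · have h1 : x < 0 := not_le.mp h0
    rw [div_lt_one (by linarith)]
    linarith

/-- If three real multipliers, all different from 1, satisfy the fixed point formula and
at most one of them is negative, then one of them lies in `[0, 1)`. -/
theorem exists_attracting_multiplier_nonneg
    (μ₁ μ₂ μ₃ : ℝ) (h₁ : μ₁ ≠ 1) (h₂ : μ₂ ≠ 1) (h₃ : μ₃ ≠ 1)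
    (hfix : 1 / (1 - μ₁) + 1 / (1 - μ₂) + 1 / (1 - μ₃) = 1)
    (hneg : (0 ≤ μ₁ ∧ 0 ≤ μ₂) ∨ (0 ≤ μ₁ ∧ 0 ≤ μ₃) ∨ (0 ≤ μ₂ ∧ 0 ≤ μ₃)) :
    (0 ≤ μ₁ ∧ μ₁ < 1) ∨ (0 ≤ μ₂ ∧ μ₂ < 1) ∨ (0 ≤ μ₃ ∧ μ₃ < 1) := by
  by_contra hc
  rw [not_or, not_or] at hc
  obtain ⟨a, b, c⟩ := hc
  rcases hneg with ⟨p, q⟩ | ⟨p, q⟩ | ⟨p, q⟩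
  · linarith [aux_neg _ h₁ p a, aux_neg _ h₂ q b, aux_lt _ h₃ c]
  · linarith [aux_neg _ h₁ p a, aux_neg _ h₃ q c, aux_lt _ h₂ b]
  · linarith [aux_neg _ h₂ p b, aux_neg _ h₃ q c, aux_lt _ h₁ a]
end

section
/- Fix μ > 1 and define g_μ : ℝ → ℝ by g_μ(x) = (1/μ)(x + 1/x) (with the convention 1/0 = 0). Let p = 1/√(μ−1). Then g_μ(p) = p, and for every x > 0 the orbit stays in (0,∞) and the iterates g_μ^[n](x) converge to p as n → ∞. -/
open Filter

lemma aux_contr (c p x k : ℝ) (hc : 0 < c) (hp : 0 < p) (hcp : c * p ^ 2 = 1) (hx : 0 < x)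
    (hk1 : 1 ≤ k * (1 + c)) (hk2 : c ≤ k * (1 + c)) :
    ((1 / (1 + c)) * (x + 1 / x) - p) ^ 2 / ((1 / (1 + c)) * (x + 1 / x))
      ≤ k * ((x - p) ^ 2 / x) := by
  have h1 : (1 / (1 + c)) * (x + 1 / x) = (x ^ 2 + 1) / ((1 + c) * x) := by
    field_simp
  have h2 : (x ^ 2 + 1) / ((1 + c) * x) - p = (x - p) * (x - c * p) / ((1 + c) * x) := by
    field_simp
    linear_combination -hcp
  have h3 : ((x - p) * (x - c * p) / ((1 + c) * x)) ^ 2 / ((x ^ 2 + 1) / ((1 + c) * x))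
      = ((x - c * p) ^ 2 / ((1 + c) * (x ^ 2 + 1))) * ((x - p) ^ 2 / x) := by
    field_simp
  rw [h1, h2, h3]
  apply mul_le_mul_of_nonneg_right _ (by positivity)
  rw [div_le_iff₀ (by positivity)]
  have h4 : (x - c * p) ^ 2 ≤ x ^ 2 + c := by
    have : (c * p) ^ 2 = c := by linear_combination c * hcp
    have : 0 < c * p * x := by positivity
    nlinarith
  have h5 : x ^ 2 * 1 ≤ x ^ 2 * (k * (1 + c)) := mul_le_mul_of_nonneg_left hk1 (by positivity)
  nlinarith

theorem symmetry_locus_orbits_converge (μ : ℝ) (hμ : 1 < μ) :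
    let g : ℝ → ℝ := fun x => (1 / μ) * (x + 1 / x)
    let p : ℝ := 1 / Real.sqrt (μ - 1)
    g p = p ∧ (∀ x : ℝ, 0 < x → ∀ n : ℕ, 0 < g^[n] x) ∧
      (∀ x : ℝ, 0 < x → Tendsto (fun n => g^[n] x) atTop (nhds p)) := by
  intro g p
  obtain ⟨c, rfl⟩ : ∃ c, μ = 1 + c := ⟨μ - 1, by ring⟩
  have hc : 0 < c := by linarith
  have hp : 0 < p := by
    have : 0 < Real.sqrt (1 + c - 1) := Real.sqrt_pos.2 (by linarith)
    positivity
  have hcp : c * p ^ 2 = 1 := by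
    simp only [p]
    rw [div_pow, Real.sq_sqrt (by linarith)]
    rw [show 1 + c - 1 = c by ring]
    field_simp
  have hpos : ∀ x : ℝ, 0 < x → ∀ n : ℕ, 0 < g^[n] x := by
    intro x hx n
    induction n with
    | zero => simpa
    | succ n ih =>
      rw [Function.iterate_succ_apply']
      simp only [g] at ih ⊢
      positivity
  clear_value p
  refine ⟨?_, hpos, ?_⟩
  · simp only [g]
    field_simp
    linear_combination -hcp
  intro x hx
  set k : ℝ := max 1 c / (1 + c) with hk
  have hkk : k * (1 + c) = max 1 c := by rw [hk]; field_simp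
  have hk0 : 0 ≤ k := by positivity
  have hk1 : k < 1 := by
    rw [hk, div_lt_one (by positivity)]
    exact max_lt (by linarith) (by linarith)
  set W : ℝ := (x - p) ^ 2 / x with hW
  have hW0 : 0 ≤ W := by positivity
  have key : ∀ n : ℕ, (g^[n] x - p) ^ 2 / g^[n] x ≤ k ^ n * W := by
    intro n
    induction n with
    | zero => simp [hW]
    | succ n ih =>
      rw [Function.iterate_succ_apply']
      have := aux_contr c p (g^[n] x) k hc hp hcp (hpos x hx n)
        (by rw [hkk]; exact le_max_left _ _) (by rw [hkk]; exact le_max_right _ _)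
      refine this.trans ?_
      calc _ ≤ k * (k ^ n * W) := mul_le_mul_of_nonneg_left ih hk0
        _ = _ := by ring
  have hsq : ∀ n : ℕ, (g^[n] x - p) ^ 2 ≤ k ^ n * (W * (W + 2 * p)) := by
    intro n
    have hy := hpos x hx n
    have h := key n
    rw [div_le_iff₀ hy] at h
    generalize g^[n] x = y at *
    have hkn : k ^ n ≤ 1 := pow_le_one₀ hk0 hk1.le
    have hkn0 : 0 ≤ k ^ n := pow_nonneg hk0 n
    have h6 : k ^ n * W ≤ W := mul_le_of_le_one_left hW0 hkn
    have h7 : y ≤ W + 2 * p := by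
      by_contra hcon
      push Not at hcon
      have h8 : k ^ n * W * y ≤ W * y := mul_le_mul_of_nonneg_right h6 hy.le
      have h9 : 0 < y * (y - (W + 2 * p)) := mul_pos hy (by linarith)
      nlinarith [sq_nonneg p]
    calc _ ≤ _ := h
      _ ≤ k ^ n * W * (W + 2 * p) := mul_le_mul_of_nonneg_left h7 (by positivity)
      _ = _ := by ring
  have ht : Tendsto (fun n : ℕ => k ^ n * (W * (W + 2 * p))) atTop (nhds 0) := by
    simpa using (tendsto_pow_atTop_nhds_zero_of_lt_one hk0 hk1).mul_const (W * (W + 2 * p))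
  have ht2 : Tendsto (fun n : ℕ => (g^[n] x - p) ^ 2) atTop (nhds 0) :=
    squeeze_zero (fun n => sq_nonneg _) hsq ht
  have ht3 : Tendsto (fun n : ℕ => |g^[n] x - p|) atTop (nhds 0) := by
    have := ht2.sqrt
    simpa [Real.sqrt_sq_eq_abs] using this
  rw [tendsto_iff_dist_tendsto_zero]
  simpa [Real.dist_eq] using ht3
end

section
/- Fix μ < −1 and define g_μ : ℝ → ℝ by g_μ(x) = (1/μ)(x + 1/x) (with the convention 1/0 = 0). Let q = 1/√(−μ−1). Then g_μ(q) = −q and g_μ(−q) = q, so {q, −q} is a 2-cycle; the multiplier of this cycle satisfies g_μ'(q) · g_μ'(−q) = ((2+μ)/μ)² < 1; moreover g_μ(x) ≠ 0 for every x ≠ 0, and for every x ≠ 0 the sequence of even iterates g_μ^[2n](x) converges, with limit equal to q or to −q. -/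
open Filter

theorem aux_step (a q x : ℝ) (ha : 1 < a) (hq : 0 < q) (hqa : q ^ 2 * (a - 1) = 1) (hx : 0 < x) :
    ((1 / a) * (x + 1 / x) - q) ^ 2 / ((1 / a) * (x + 1 / x)) ≤
      (1 - (a - 1) / a ^ 2) * ((x - q) ^ 2 / x) := by
  have ha0 : 0 < a := by linarith
  obtain ⟨t, rfl⟩ : ∃ t, x = q * t := ⟨x / q, by field_simp⟩
  have ht : 0 < t := by
    by_contra h
    nlinarith
  have h1 : (1 / a) * (q * t + 1 / (q * t)) = q * ((t ^ 2 + (a - 1)) / (a * t)) := by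
    field_simp
    linear_combination (-1 : ℝ) * hqa
  rw [h1]
  have hden : 0 < t ^ 2 + (a - 1) := by nlinarith
  have h2 : (q * ((t ^ 2 + (a - 1)) / (a * t)) - q) ^ 2 / (q * ((t ^ 2 + (a - 1)) / (a * t)))
      = q * ((t - 1) ^ 2 / t) * ((t - (a - 1)) ^ 2 / (a * (t ^ 2 + (a - 1)))) := by
    field_simp
    ring
  have h3 : (q * t - q) ^ 2 / (q * t) = q * ((t - 1) ^ 2 / t) := by
    field_simp
  rw [h2, h3, mul_comm (1 - (a - 1) / a ^ 2)]
  apply mul_le_mul_of_nonneg_left _ (by positivity)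
  have h4 : (t - (a - 1)) ^ 2 / (a * (t ^ 2 + (a - 1)))
      = 1 - (a - 1) * (t + 1) ^ 2 / (a * (t ^ 2 + (a - 1))) := by
    field_simp
    ring
  rw [h4]
  apply sub_le_sub_left
  rw [div_le_div_iff₀ (by positivity) (by positivity)]
  have h5 : t ^ 2 + (a - 1) ≤ a * (t + 1) ^ 2 := by nlinarith [mul_pos ha0 ht, sq_nonneg t]
  have h6 : 0 ≤ (a - 1) * a := by nlinarith
  nlinarith [mul_le_mul_of_nonneg_left h5 h6]

theorem aux_tendsto (a q x : ℝ) (ha : 1 < a) (hq : 0 < q) (hqa : q ^ 2 * (a - 1) = 1)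
    (hx : 0 < x) :
    Tendsto (fun n => (fun x : ℝ => (1 / a) * (x + 1 / x))^[n] x) atTop (nhds q) := by
  set h : ℝ → ℝ := fun x : ℝ => (1 / a) * (x + 1 / x) with hh
  set c : ℝ := 1 - (a - 1) / a ^ 2 with hc
  have ha0 : 0 < a := by linarith
  have hc0 : 0 ≤ c := by
    have : (a - 1) / a ^ 2 ≤ 1 := by
      rw [div_le_one (by positivity)]
      nlinarith
    linarith
  have hc1 : c < 1 := by
    have : 0 < (a - 1) / a ^ 2 := div_pos (by linarith) (by positivity)
    linarith
  have key : ∀ n, 0 < h^[n] x ∧ (h^[n] x - q) ^ 2 / h^[n] x ≤ c ^ n * ((x - q) ^ 2 / x) := by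
    intro n
    induction n with
    | zero => simp [hx]
    | succ n ih =>
      rw [Function.iterate_succ_apply']
      obtain ⟨hp, hle⟩ := ih
      refine ⟨by simp only [hh] at hp ⊢; positivity, ?_⟩
      calc _ ≤ c * ((h^[n] x - q) ^ 2 / h^[n] x) := aux_step a q _ ha hq hqa hp
        _ ≤ c * (c ^ n * ((x - q) ^ 2 / x)) := mul_le_mul_of_nonneg_left hle hc0
        _ = _ := by ring
  have hlim : Tendsto (fun n : ℕ => c ^ n * ((x - q) ^ 2 / x)) atTop (nhds 0) := by
    simpa using (tendsto_pow_atTop_nhds_zero_of_lt_one hc0 hc1).mul_const ((x - q) ^ 2 / x)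
  have hlim2 : Tendsto (fun n : ℕ => (c ^ n * ((x - q) ^ 2 / x)) *
      (c ^ n * ((x - q) ^ 2 / x) + 2 * q)) atTop (nhds 0) := by
    simpa using hlim.mul (hlim.add_const (2 * q))
  have hsq : Tendsto (fun n => (h^[n] x - q) ^ 2) atTop (nhds 0) := by
    refine squeeze_zero (fun n => sq_nonneg _) (fun n => ?_) hlim2
    obtain ⟨hp, hle⟩ := key n
    set y := h^[n] x
    set e := c ^ n * ((x - q) ^ 2 / x)
    rw [div_le_iff₀ hp] at hle
    have he : 0 ≤ e := by positivity
    have hy : y ≤ e + 2 * q := by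
      by_contra hcon
      push Not at hcon
      nlinarith [mul_pos hp (sub_pos.2 hcon), sq_nonneg q, pow_pos hq 2]
    exact hle.trans (mul_le_mul_of_nonneg_left hy he)
  have habs : Tendsto (fun n => |h^[n] x - q|) atTop (nhds 0) := by
    have := hsq.sqrt
    simpa [Real.sqrt_sq_eq_abs] using this
  have := (tendsto_zero_iff_abs_tendsto_zero _).2 habs
  simpa using this.add_const q

/-- For `μ < −1`, the map `g(x) = (1/μ)(x + 1/x)` has the attracting 2-cycle
`{±1/√(−μ−1)}`, of multiplier `((2+μ)/μ)² < 1`, and every nonzero real point converges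
under iteration to this 2-cycle. -/
theorem symmetry_locus_two_cycle (μ : ℝ) (hμ : μ < -1) :
    let g : ℝ → ℝ := fun x => (1 / μ) * (x + 1 / x)
    let q : ℝ := 1 / Real.sqrt (-μ - 1)
    g q = -q ∧ g (-q) = q ∧
      deriv g q * deriv g (-q) = ((2 + μ) / μ) ^ 2 ∧ ((2 + μ) / μ) ^ 2 < 1 ∧
      (∀ x : ℝ, x ≠ 0 → g x ≠ 0) ∧
      (∀ x : ℝ, x ≠ 0 → ∃ L : ℝ, (L = q ∨ L = -q) ∧
        Tendsto (fun n => g^[2 * n] x) atTop (nhds L)) := by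
  intro g q
  have hs : 0 < -μ - 1 := by linarith
  have hq : 0 < q := one_div_pos.2 (Real.sqrt_pos.2 hs)
  have hqa : q ^ 2 * (-μ - 1) = 1 := by
    simp only [q, div_pow, Real.sq_sqrt hs.le]
    field_simp
  have hμ0 : μ ≠ 0 := by linarith
  have hodd : ∀ x, g (-x) = -g x := by
    intro x
    simp only [g, one_div, inv_neg]
    ring
  have hgq : g q = -q := by
    simp only [g]
    field_simp
    linear_combination (-1 : ℝ) * hqa
  have hder : ∀ x : ℝ, x ≠ 0 → deriv g x = (1 / μ) * (1 - 1 / x ^ 2) := by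
    intro x hx
    have h1 : HasDerivAt g ((1 / μ) * (1 + -(x ^ 2)⁻¹)) x := by
      have := ((hasDerivAt_id x).add (hasDerivAt_inv hx)).const_mul (1 / μ)
      refine this.congr_of_eventuallyEq (Eventually.of_forall fun y => ?_)
      simp [g]
    rw [h1.deriv]
    ring
  refine ⟨hgq, by rw [hodd, hgq, neg_neg], ?_, ?_, ?_, ?_⟩
  · rw [hder q hq.ne', hder (-q) (neg_ne_zero.2 hq.ne')]
    have : 1 / q ^ 2 = -μ - 1 := by
      field_simp
      linarith
    rw [neg_sq, this]
    ring
  · rw [div_pow, div_lt_one (by positivity)]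
    nlinarith
  · intro x hx h
    simp only [g] at h
    field_simp at h
    nlinarith [sq_nonneg x]
  · set k : ℝ → ℝ := fun x => (1 / (-μ)) * (x + 1 / x) with hk
    have hgk : ∀ x, g x = -k x := by
      intro x
      simp only [g, hk, one_div, inv_neg]
      ring
    have h2 : g^[2] = k^[2] := by
      funext x
      simp only [Function.iterate_succ, Function.iterate_zero, Function.comp, id]
      rw [hgk x, hodd, hgk, neg_neg]
    have hodd2 : ∀ (n : ℕ) x, g^[n] (-x) = -g^[n] x := by
      intro n
      induction n with
      | zero => simp
      | succ n ih =>
        intro x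
        rw [Function.iterate_succ_apply, hodd, ih, Function.iterate_succ_apply]
    have hpos : ∀ x, 0 < x → Tendsto (fun n => g^[2 * n] x) atTop (nhds q) := by
      intro x hx
      have h := aux_tendsto (-μ) q x (by linarith) hq hqa hx
      have h' := h.comp (tendsto_id.const_mul_atTop' (show 0 < 2 by norm_num))
      refine h'.congr fun n => ?_
      simp only [Function.comp, id]
      rw [Function.iterate_mul, Function.iterate_mul, h2]
    intro x hx
    rcases lt_or_gt_of_ne hx with hx | hx
    · refine ⟨-q, Or.inr rfl, ?_⟩
      refine (hpos (-x) (by linarith)).neg.congr fun n => ?_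
      rw [hodd2, neg_neg]
    · exact ⟨q, Or.inl rfl, hpos x hx⟩
end

section
/- Define the Schwarzian derivative of a function f at x by S f(x) = f'''(x)/f'(x) − (3/2)·(f''(x)/f'(x))², using iterated derivatives. (1) For μ ≠ 0 and a ∈ ℝ, let f(x) = (1/μ)(x + 1/x) + a (convention 1/0 = 0); then for every x ∉ {−1, 0, 1} one has S f(x) = −6/(x²−1)², which is negative. (2) For c ∈ ℝ, let g(x) = x² + c; then for every x ≠ 0 one has S g(x) = −3/(2x²), which is negative. -/
/-- The Schwarzian derivative `S f = f'''/f' − (3/2)(f''/f')²`, using iterated derivatives. -/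
noncomputable def schwarzianDeriv (f : ℝ → ℝ) (x : ℝ) : ℝ :=
  deriv (deriv (deriv f)) x / deriv f x - (3 / 2) * (deriv (deriv f) x / deriv f x) ^ 2

theorem sch_aux (f f1 f2 f3 : ℝ → ℝ) (h1 : ∀ y, y ≠ 0 → HasDerivAt f (f1 y) y)
    (h2 : ∀ y, y ≠ 0 → HasDerivAt f1 (f2 y) y) (h3 : ∀ y, y ≠ 0 → HasDerivAt f2 (f3 y) y)
    (x : ℝ) (hx : x ≠ 0) :
    schwarzianDeriv f x = f3 x / f1 x - (3 / 2) * (f2 x / f1 x) ^ 2 := by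
  have e1 : ∀ y, y ≠ 0 → deriv f y = f1 y := fun y hy => (h1 y hy).deriv
  have e2 : ∀ y, y ≠ 0 → deriv (deriv f) y = f2 y := fun y hy => by
    have : deriv f =ᶠ[nhds y] f1 := by
      filter_upwards [isOpen_ne.mem_nhds hy] with z hz using e1 z hz
    rw [this.deriv_eq, (h2 y hy).deriv]
  have e3 : deriv (deriv (deriv f)) x = f3 x := by
    have : deriv (deriv f) =ᶠ[nhds x] f2 := by
      filter_upwards [isOpen_ne.mem_nhds hx] with z hz using e2 z hz
    rw [this.deriv_eq, (h3 x hx).deriv]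
  rw [schwarzianDeriv, e3, e2 x hx, e1 x hx]

/-- The Schwarzian derivative of a real quadratic rational map with real critical points
is negative: explicitly `S f(x) = −6/(x²−1)²` for `f(x) = (1/μ)(x + 1/x) + a`, and
`S g(x) = −3/(2x²)` for `g(x) = x² + c`. -/
theorem schwarzian_negative :
    (∀ μ : ℝ, μ ≠ 0 → ∀ a : ℝ, ∀ x : ℝ, x ∉ ({-1, 0, 1} : Set ℝ) →
      schwarzianDeriv (fun y => (1 / μ) * (y + 1 / y) + a) x = -6 / (x ^ 2 - 1) ^ 2 ∧
        -6 / (x ^ 2 - 1) ^ 2 < 0) ∧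
    (∀ c : ℝ, ∀ x : ℝ, x ≠ 0 →
      schwarzianDeriv (fun y => y ^ 2 + c) x = -3 / (2 * x ^ 2) ∧
        -3 / (2 * x ^ 2) < 0) := by
  constructor
  · intro μ hμ a x hx
    simp only [Set.mem_insert_iff, Set.mem_singleton_iff, not_or] at hx
    obtain ⟨hm, h0, hp⟩ := hx
    have hq : x ^ 2 - 1 ≠ 0 := by
      have : x ^ 2 - 1 = (x - 1) * (x - -1) := by ring
      rw [this]
      exact mul_ne_zero (sub_ne_zero.2 hp) (sub_ne_zero.2 hm)
    refine ⟨?_, div_neg_of_neg_of_pos (by norm_num) (by positivity)⟩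
    rw [sch_aux _ (fun y => (1 / μ) * (1 - (y ^ 2)⁻¹)) (fun y => (1 / μ) * (2 * (y ^ 3)⁻¹))
      (fun y => (1 / μ) * (-6 * (y ^ 4)⁻¹)) ?_ ?_ ?_ x h0]
    · have e : (1 / μ) * (1 - (x ^ 2)⁻¹) = (x ^ 2 - 1) / (μ * x ^ 2) := by
        field_simp
      simp only [e]
      field_simp
      ring
    · intro y hy
      have := (((hasDerivAt_id y).add (hasDerivAt_inv hy)).const_mul (1 / μ)).add_const a
      have e : (fun y : ℝ => (1 / μ) * (y + 1 / y) + a) =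
          fun x => 1 / μ * ((id : ℝ → ℝ) + fun y : ℝ => y⁻¹) x + a := by
        ext z; simp
      rw [e]
      exact this.congr_deriv (by ring)
    · intro y hy
      have := ((((hasDerivAt_pow 2 y).fun_inv (pow_ne_zero 2 hy)).const_sub 1).const_mul (1 / μ))
      refine this.congr_deriv ?_
      field_simp
      try norm_num
      try ring
    · intro y hy
      have := ((((hasDerivAt_pow 3 y).fun_inv (pow_ne_zero 3 hy)).const_mul 2).const_mul (1 / μ))
      refine this.congr_deriv ?_
      field_simp
      try norm_num
      try ring
  · intro c x hx
    refine ⟨?_, div_neg_of_neg_of_pos (by norm_num) (by positivity)⟩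
    rw [sch_aux _ (fun y => 2 * y) (fun y => 2) (fun y => 0) ?_ ?_ ?_ x hx]
    · field_simp
      try norm_num
      try ring
    · intro y hy
      simpa using (hasDerivAt_pow 2 y).add_const c
    · intro y hy
      simpa using (hasDerivAt_id y).const_mul 2
    · intro y hy
      exact hasDerivAt_const y 2
end

section
/- For real parameters μ > 0 and t > 2, define f_{μ,t} : ℝ → ℝ by f_{μ,t}(x) = 2μx(tx+2)/(μ²x² + (tx+2)²). Then −1 ≤ −2/t < −2/(μ+t) < 0, f_{μ,t}(−2/t) = 0, f_{μ,t}(−2/(μ+t)) = −1, and for every y ∈ [−1, 0] there exist x₁ ∈ [−2/t, −2/(μ+t)] and x₂ ∈ [−2/(μ+t), 0] with f_{μ,t}(x₁) = y and f_{μ,t}(x₂) = y; that is, the interval [−1,0] is doubly covered by the subinterval [−2/t, 0] of itself. -/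
/-- For `μ > 0` and `t > 2`, the interval `[−1,0]` is doubly covered by the subinterval
`[−2/t, 0]` of itself under the normal form `f_{μ,t}`. -/
theorem double_covering_above_line (μ t : ℝ) (hμ : 0 < μ) (ht : 2 < t) :
    let f : ℝ → ℝ := fun x => 2 * μ * x * (t * x + 2) / (μ ^ 2 * x ^ 2 + (t * x + 2) ^ 2)
    (-1 ≤ -2 / t ∧ -2 / t < -2 / (μ + t) ∧ -2 / (μ + t) < 0) ∧
    f (-2 / t) = 0 ∧ f (-2 / (μ + t)) = -1 ∧
    ∀ y ∈ Set.Icc (-1 : ℝ) 0,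
      (∃ x₁ ∈ Set.Icc (-2 / t) (-2 / (μ + t)), f x₁ = y) ∧
      (∃ x₂ ∈ Set.Icc (-2 / (μ + t)) (0 : ℝ), f x₂ = y) := by
  intro f
  have h0 : 0 < t := by linarith
  have hs : 0 < μ + t := by linarith
  have hden : ∀ x : ℝ, μ ^ 2 * x ^ 2 + (t * x + 2) ^ 2 ≠ 0 := by
    intro x
    by_cases hx : x = 0
    · subst hx
      norm_num
    · positivity
  have hc : Continuous f := by
    apply Continuous.div
    · fun_prop
    · fun_prop
    · exact hden
  have a1 : -1 ≤ -2 / t := by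
    rw [le_div_iff₀ h0]
    linarith
  have a2 : -2 / t < -2 / (μ + t) := by
    rw [div_lt_div_iff₀ h0 hs]
    linarith
  have a3 : -2 / (μ + t) < 0 := div_neg_of_neg_of_pos (by norm_num) hs
  have b1 : f (-2 / t) = 0 := by
    have e : t * (-2 / t) + 2 = 0 := by
      field_simp
      ring
    simp only [f]
    rw [e]
    simp
  have b2 : f (-2 / (μ + t)) = -1 := by
    have e : t * (-2 / (μ + t)) + 2 = -μ * (-2 / (μ + t)) := by
      field_simp
      ring
    have hd := hden (-2 / (μ + t))
    simp only [f]
    rw [div_eq_iff hd, e]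
    ring
  have b3 : f 0 = 0 := by simp [f]
  refine ⟨⟨a1, a2, a3⟩, b1, b2, ?_⟩
  intro y hy
  constructor
  · have h := intermediate_value_Icc' a2.le hc.continuousOn
    rw [b1, b2] at h
    exact h hy
  · have h := intermediate_value_Icc a3.le hc.continuousOn
    rw [b3, b2] at h
    exact h hy
end

section
/- For real parameters μ > 0 and t > 2, define f_{μ,t} : ℝ → ℝ by f_{μ,t}(x) = 2μx(tx+2)/(μ²x² + (tx+2)²); it maps the interval [−1,1] into itself. Then the topological entropy of the induced self-map of [−1,1] equals log 2. -/
open Set Dynamics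

lemma aux_card_iter (f : ℝ → ℝ) (h2 : ∀ (S : Finset ℝ) (y : ℝ), (∀ x ∈ S, f x = y) → S.card ≤ 2)
    (k : ℕ) : ∀ (S : Finset ℝ) (y : ℝ), (∀ x ∈ S, f^[k] x = y) → S.card ≤ 2 ^ k := by
  induction k with
  | zero =>
    intro S y h
    simp only [Function.iterate_zero, id, pow_zero] at h ⊢
    exact Finset.card_le_one.2 fun a ha b hb => (h a ha).trans (h b hb).symm
  | succ k ih =>
    intro S y h
    have h1 : (S.image f).card ≤ 2 ^ k := by
      apply ih _ y
      intro x hx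
      obtain ⟨z, hz, rfl⟩ := Finset.mem_image.1 hx
      simpa using h z hz
    have h3 := Finset.card_le_mul_card_image (f := f) S 2 (by
      intro b _
      exact h2 _ b (fun x hx => (Finset.mem_filter.1 hx).2))
    calc S.card ≤ 2 * (S.image f).card := h3
      _ ≤ 2 * 2 ^ k := by gcongr
      _ = 2 ^ (k + 1) := by ring

lemma aux_var (g : ℝ → ℝ) (hg : Continuous g) (hm : MapsTo g (Icc (-1) 1) (Icc (-1) 1)) (N : ℕ)
    (hN : ∀ (S : Finset ℝ) (y : ℝ), (∀ x ∈ S, g x = y) → S.card ≤ N) :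
    eVariationOn g (Icc (-1) 1) ≤ N * 2 := by
  unfold eVariationOn
  refine iSup_le ?_
  rintro ⟨n, u, hu, hus⟩
  simp only
  have key : ∀ y : ℝ, ∑ i ∈ Finset.range n,
      (uIoo (g (u i)) (g (u (i+1)))).indicator (fun _ => (1 : ENNReal)) y
      ≤ (Icc (-1 : ℝ) 1).indicator (fun _ => (N : ENNReal)) y := by
    intro y
    classical
    set I := (Finset.range n).filter (fun i => y ∈ uIoo (g (u i)) (g (u (i+1)))) with hI
    have hsum : ∑ i ∈ Finset.range n,
      (uIoo (g (u i)) (g (u (i+1)))).indicator (fun _ => (1 : ENNReal)) y = I.card := by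
      simp only [Set.indicator_apply, Finset.sum_boole, hI]
    have hx : ∀ i, ∃ x, i ∈ I → x ∈ Ioo (u i) (u (i+1)) ∧ g x = y := by
      intro i
      by_cases hi : i ∈ I
      · have hy := (Finset.mem_filter.1 hi).2
        have hle : u i ≤ u (i+1) := hu (Nat.le_succ i)
        rcases le_total (g (u i)) (g (u (i+1))) with h | h
        · rw [uIoo_of_le h] at hy
          obtain ⟨x, hx, hxy⟩ := intermediate_value_Ioo hle hg.continuousOn hy
          exact ⟨x, fun _ => ⟨hx, hxy⟩⟩
        · rw [uIoo_of_ge h] at hy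
          obtain ⟨x, hx, hxy⟩ := intermediate_value_Ioo' hle hg.continuousOn hy
          exact ⟨x, fun _ => ⟨hx, hxy⟩⟩
      · exact ⟨0, fun h => absurd h hi⟩
    choose x hx using hx
    have hinj : Set.InjOn x I := by
      have hlt : ∀ i ∈ I, ∀ j ∈ I, i < j → x i < x j := by
        intro i hi j hj hij
        have h1 := (hx i hi).1.2
        have h2 := (hx j hj).1.1
        have h3 : u (i+1) ≤ u j := hu hij
        linarith
      intro i hi j hj hij
      rcases lt_trichotomy i j with h | h | h
      · exact absurd hij (hlt i hi j hj h).ne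
      · exact h
      · exact absurd hij (hlt j hj i hi h).ne'
    have hcard : I.card ≤ N := by
      rw [← Finset.card_image_of_injOn hinj]
      apply hN _ y
      intro z hz
      obtain ⟨i, hi, rfl⟩ := Finset.mem_image.1 hz
      exact (hx i hi).2
    rw [hsum]
    by_cases hy : y ∈ Icc (-1 : ℝ) 1
    · rw [indicator_of_mem hy]
      exact_mod_cast hcard
    · have : I = ∅ := by
        by_contra hne
        obtain ⟨i, hi⟩ := Finset.nonempty_iff_ne_empty.2 hne
        obtain ⟨hxi, hxy⟩ := hx i hi
        apply hy
        rw [← hxy]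
        apply hm
        have h1 := (hus i).1
        have h2 := (hus (i+1)).2
        exact ⟨by linarith [hxi.1], by linarith [hxi.2]⟩
      simp [this]
  calc ∑ i ∈ Finset.range n, edist (g (u (i+1))) (g (u i))
      = ∑ i ∈ Finset.range n, ∫⁻ y, (uIoo (g (u i)) (g (u (i+1)))).indicator
          (fun _ => (1 : ENNReal)) y := by
        apply Finset.sum_congr rfl
        intro i _
        rw [MeasureTheory.lintegral_indicator (show MeasurableSet (uIoo (g (u i)) (g (u (i+1)))) from measurableSet_Ioo)]
        simp [edist_dist, Real.dist_eq, Real.volume_uIoo]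
    _ = ∫⁻ y, ∑ i ∈ Finset.range n, (uIoo (g (u i)) (g (u (i+1)))).indicator
          (fun _ => (1 : ENNReal)) y := by
        rw [MeasureTheory.lintegral_finsetSum]
        intro i _
        exact measurable_const.indicator measurableSet_Ioo
    _ ≤ ∫⁻ y, (Icc (-1 : ℝ) 1).indicator (fun _ => (N : ENNReal)) y :=
        MeasureTheory.lintegral_mono key
    _ = N * 2 := by
        rw [MeasureTheory.lintegral_indicator measurableSet_Icc]
        simp
        norm_num

lemma aux_cover (f : ℝ → ℝ) (hf : Continuous f) (hm : MapsTo f (Icc (-1) 1) (Icc (-1) 1))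
    (h2 : ∀ (S : Finset ℝ) (y : ℝ), (∀ x ∈ S, f x = y) → S.card ≤ 2)
    (ε : ℝ) (hε : 0 < ε) (n : ℕ) :
    ∃ s : Finset ℝ, (s.card : ℝ) ≤ (2 / ε + 1) * 2 ^ n ∧
      ∀ x ∈ Icc (-1 : ℝ) 1, ∃ y ∈ s, ∀ k < n, |f^[k] x - f^[k] y| < ε := by
  have hvar : ∀ k, eVariationOn (f^[k]) (Icc (-1) 1) ≤ ((2 ^ k : ℕ) : ENNReal) * 2 := fun k =>
    aux_var _ (hf.iterate k) (hm.iterate k) _ (aux_card_iter f h2 k)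
  have hfin : ∀ k, ∀ x ∈ Icc (-1 : ℝ) 1, eVariationOn (f^[k]) (Icc (-1) x) ≤
      ((2 ^ k : ℕ) : ENNReal) * 2 := fun k x hx =>
    (eVariationOn.mono _ (Icc_subset_Icc_right hx.2)).trans (hvar k)
  have htop : ∀ k : ℕ, ((2 ^ k : ℕ) : ENNReal) * 2 ≠ ⊤ := fun k =>
    ENNReal.mul_ne_top (ENNReal.natCast_ne_top _) (by simp)
  set W : ℕ → ℝ → ℝ := fun k x => (eVariationOn (f^[k]) (Icc (-1) x)).toReal with hW
  have hWle : ∀ k, ∀ x ∈ Icc (-1 : ℝ) 1, W k x ≤ 2 ^ k * 2 := by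
    intro k x hx
    have := ENNReal.toReal_mono (htop k) (hfin k x hx)
    simpa using this
  have hWd : ∀ k, ∀ x ∈ Icc (-1 : ℝ) 1, ∀ y ∈ Icc (-1 : ℝ) 1, x ≤ y →
      |f^[k] x - f^[k] y| ≤ W k y - W k x := by
    intro k x hx y hy hxy
    have h1 := eVariationOn.Icc_add_Icc (f^[k]) (s := univ) hx.1 hxy (mem_univ _)
    simp only [univ_inter] at h1
    have h3 : edist (f^[k] x) (f^[k] y) ≤ eVariationOn (f^[k]) (Icc x y) :=
      eVariationOn.edist_le _ ⟨le_rfl, hxy⟩ ⟨hxy, le_rfl⟩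
    have hyt := ne_top_of_le_ne_top (htop k) (hfin k y hy)
    have hxt := ne_top_of_le_ne_top (htop k) (hfin k x hx)
    have hxyt : eVariationOn (f^[k]) (Icc x y) ≠ ⊤ := by
      refine ne_top_of_le_ne_top hyt ?_
      rw [← h1]; exact le_add_self
    have h4 : W k x + (eVariationOn (f^[k]) (Icc x y)).toReal = W k y := by
      simp only [hW]
      rw [← ENNReal.toReal_add hxt hxyt, h1]
    have h5 := ENNReal.toReal_mono hxyt h3
    rw [edist_dist, ENNReal.toReal_ofReal dist_nonneg, Real.dist_eq] at h5
    linarith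
  set V : ℝ → ℝ := fun x => ∑ k ∈ Finset.range n, W k x with hV
  have hVle : ∀ x ∈ Icc (-1 : ℝ) 1, V x ≤ 2 * 2 ^ n := by
    intro x hx
    calc V x ≤ ∑ k ∈ Finset.range n, (2 : ℝ) ^ k * 2 := Finset.sum_le_sum fun k _ => hWle k x hx
      _ = (∑ k ∈ Finset.range n, (2 : ℝ) ^ k) * 2 := by rw [Finset.sum_mul]
      _ ≤ 2 * 2 ^ n := by
        rw [geom_sum_eq (by norm_num)]
        linarith
  have hV0 : ∀ x, 0 ≤ V x := fun x => Finset.sum_nonneg fun k _ => ENNReal.toReal_nonneg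
  have hVd : ∀ x ∈ Icc (-1 : ℝ) 1, ∀ y ∈ Icc (-1 : ℝ) 1, x ≤ y → ∀ k < n,
      |f^[k] x - f^[k] y| ≤ V y - V x := by
    intro x hx y hy hxy k hk
    refine (hWd k x hx y hy hxy).trans ?_
    simp only [hV]
    rw [← Finset.sum_sub_distrib]
    exact Finset.single_le_sum (f := fun k => W k y - W k x)
      (fun j _ => (abs_nonneg _).trans (hWd j x hx y hy hxy)) (Finset.mem_range.2 hk)
  have hch : ∀ j : ℕ, ∃ y : ℝ, (∃ x ∈ Icc (-1 : ℝ) 1, ⌊V x / ε⌋₊ = j) →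
      y ∈ Icc (-1 : ℝ) 1 ∧ ⌊V y / ε⌋₊ = j := by
    intro j
    by_cases h : ∃ x ∈ Icc (-1 : ℝ) 1, ⌊V x / ε⌋₊ = j
    · obtain ⟨x, hx⟩ := h
      exact ⟨x, fun _ => hx⟩
    · exact ⟨0, fun h' => absurd h' h⟩
  choose p hp using hch
  classical
  refine ⟨(Finset.range (⌊2 * 2 ^ n / ε⌋₊ + 1)).image p, ?_, ?_⟩
  · have h1 : ((Finset.range (⌊(2 * 2 ^ n / ε : ℝ)⌋₊ + 1)).image p).card ≤
        ⌊(2 * 2 ^ n / ε : ℝ)⌋₊ + 1 := Finset.card_image_le.trans (by simp)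
    have h3 : ((⌊(2 * 2 ^ n / ε : ℝ)⌋₊ : ℕ) : ℝ) ≤ 2 * 2 ^ n / ε :=
      Nat.floor_le (by positivity)
    have h4 : (1 : ℝ) ≤ 2 ^ n := one_le_pow₀ (by norm_num)
    have h5 : (2 / ε + 1) * 2 ^ n = 2 * 2 ^ n / ε + 2 ^ n := by ring
    rw [h5]
    have h6 : (((Finset.range (⌊(2 * 2 ^ n / ε : ℝ)⌋₊ + 1)).image p).card : ℝ) ≤
        (⌊(2 * 2 ^ n / ε : ℝ)⌋₊ : ℝ) + 1 := by exact_mod_cast h1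
    linarith
  · intro x hx
    set j := ⌊V x / ε⌋₊ with hj
    obtain ⟨hy, hyj⟩ := hp j ⟨x, hx, hj.symm⟩
    refine ⟨p j, Finset.mem_image_of_mem _ ?_, ?_⟩
    · rw [Finset.mem_range, Nat.lt_succ_iff]
      exact Nat.floor_le_floor (by gcongr; exact hVle x hx)
    · have e1 := Nat.floor_le (div_nonneg (hV0 x) hε.le)
      have e2 := Nat.lt_floor_add_one (V x / ε)
      have e3 := Nat.floor_le (div_nonneg (hV0 (p j)) hε.le)
      have e4 := Nat.lt_floor_add_one (V (p j) / ε)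
      rw [hyj] at e3 e4
      rw [← hj] at e1 e2
      rw [le_div_iff₀ hε] at e1 e3
      rw [div_lt_iff₀ hε] at e2 e4
      intro k hk
      rcases le_total x (p j) with h | h
      · have := hVd x hx _ hy h k hk
        linarith
      · have := hVd _ hy x hx h k hk
        rw [abs_sub_comm]
        linarith

lemma aux_log2 : ENNReal.log 2 = (Real.log 2 : EReal) := by
  have := ENNReal.log_ofReal_of_pos (x := 2) (by norm_num)
  simpa using this

lemma aux_upper (f : ℝ → ℝ) (hf : Continuous f) (hm : MapsTo f (Icc (-1) 1) (Icc (-1) 1))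
    (h2 : ∀ (S : Finset ℝ) (y : ℝ), (∀ x ∈ S, f x = y) → S.card ≤ 2) :
    coverEntropy f (Icc (-1) 1) ≤ (Real.log 2 : EReal) := by
  rw [coverEntropy_eq_iSup_basis Metric.uniformity_basis_dist]
  refine iSup₂_le fun ε hε => ?_
  rw [← aux_log2, ← ExpGrowth.expGrowthSup_pow]
  refine ExpGrowth.expGrowthSup_le_of_eventually_le (b := ENNReal.ofReal (2 / ε + 1)) (by simp) ?_
  refine Filter.Eventually.of_forall fun n => ?_
  obtain ⟨s, hs, hcov⟩ := aux_cover f hf hm h2 ε hε n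
  have hc : IsDynCoverOf f (Icc (-1) 1) {p : ℝ × ℝ | dist p.1 p.2 < ε} n s := by
    intro x hx
    obtain ⟨y, hy, h⟩ := hcov x hx
    refine ⟨y, hy, ?_⟩
    simp only [dynEntourage, mem_iInter]
    intro k hk
    simpa [Real.dist_eq] using h k hk
  have h1 := hc.coverMincard_le_card
  have h3 : ((coverMincard f (Icc (-1) 1) {p : ℝ × ℝ | dist p.1 p.2 < ε} n : ℕ∞) : ENNReal)
      ≤ (s.card : ENNReal) := by
    have := ENat.toENNReal_mono h1
    simpa using this
  refine h3.trans ?_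
  have h4 := ENNReal.ofReal_le_ofReal hs
  rw [ENNReal.ofReal_natCast, ENNReal.ofReal_mul (by have := hε; positivity)] at h4
  refine h4.trans_eq ?_
  congr 1
  rw [ENNReal.ofReal_pow (by norm_num)]
  simp

lemma aux_lower (f : ℝ → ℝ) (J : Set ℝ) (hJ : J ⊆ Icc (-1) 1) (hne : J.Nonempty) (a b : ℝ)
    (hab : a < b)
    (hA : ∀ y ∈ J, ∃ x ∈ J, x ≤ a ∧ f x = y) (hB : ∀ y ∈ J, ∃ x ∈ J, b ≤ x ∧ f x = y) :
    (Real.log 2 : EReal) ≤ coverEntropy f (Icc (-1) 1) := by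
  have hδ : 0 < (b - a) / 2 := by linarith
  refine le_trans ?_ (netEntropyEntourage_le_coverEntropy (T := f) (F := Icc (-1) 1)
    (Metric.dist_mem_uniformity hδ))
  rw [← aux_log2, ← ExpGrowth.expGrowthSup_pow]
  refine ExpGrowth.expGrowthSup_monotone fun n => ?_
  have key : ∀ n : ℕ, ∃ S : Finset ℝ, S.card = 2 ^ n ∧ (∀ x ∈ S, x ∈ J) ∧
      ∀ x ∈ S, ∀ y ∈ S, x ≠ y → ∃ k < n, b - a ≤ |f^[k] x - f^[k] y| := by
    intro n
    induction n with
    | zero =>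
      obtain ⟨x, hx⟩ := hne
      refine ⟨{x}, by simp, by simpa using hx, ?_⟩
      intro u hu v hv huv
      simp at hu hv
      exact absurd (hu.trans hv.symm) huv
    | succ n ih =>
      obtain ⟨S, hS, hSJ, hsep⟩ := ih
      choose! p hpJ hpa hpf using hA
      choose! q hqJ hqb hqf using hB
      classical
      have hpi : Set.InjOn p S := by
        intro x hx y hy hxy
        rw [← hpf x (hSJ x hx), hxy, hpf y (hSJ y hy)]
      have hqi : Set.InjOn q S := by
        intro x hx y hy hxy
        rw [← hqf x (hSJ x hx), hxy, hqf y (hSJ y hy)]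
      have hdisj : Disjoint (S.image p) (S.image q) := by
        rw [Finset.disjoint_left]
        intro z hz hz'
        obtain ⟨x, hx, rfl⟩ := Finset.mem_image.1 hz
        obtain ⟨y, hy, hyx⟩ := Finset.mem_image.1 hz'
        have := hpa x (hSJ x hx)
        have := hqb y (hSJ y hy)
        linarith
      refine ⟨S.image p ∪ S.image q, ?_, ?_, ?_⟩
      · rw [Finset.card_union_of_disjoint hdisj, Finset.card_image_of_injOn hpi,
          Finset.card_image_of_injOn hqi, hS]
        ring
      · intro x hx
        rcases Finset.mem_union.1 hx with h | h
        · obtain ⟨y, hy, rfl⟩ := Finset.mem_image.1 h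
          exact hpJ y (hSJ y hy)
        · obtain ⟨y, hy, rfl⟩ := Finset.mem_image.1 h
          exact hqJ y (hSJ y hy)
      · intro u hu v hv huv
        rcases Finset.mem_union.1 hu with h | h <;> rcases Finset.mem_union.1 hv with h' | h' <;>
          obtain ⟨x, hx, rfl⟩ := Finset.mem_image.1 h <;>
          obtain ⟨y, hy, rfl⟩ := Finset.mem_image.1 h'
        · obtain ⟨k, hk, hd⟩ := hsep x hx y hy (fun e => huv (by rw [e]))
          refine ⟨k + 1, by omega, ?_⟩
          rwa [Function.iterate_succ_apply, Function.iterate_succ_apply, hpf x (hSJ x hx),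
            hpf y (hSJ y hy)]
        · refine ⟨0, by omega, ?_⟩
          have h1 := hpa x (hSJ x hx)
          have h3 := hqb y (hSJ y hy)
          simp only [Function.iterate_zero, id]
          rw [abs_sub_comm]
          exact le_trans (by linarith) (le_abs_self _)
        · refine ⟨0, by omega, ?_⟩
          have h1 := hqb x (hSJ x hx)
          have h3 := hpa y (hSJ y hy)
          simp only [Function.iterate_zero, id]
          exact le_trans (by linarith) (le_abs_self _)
        · obtain ⟨k, hk, hd⟩ := hsep x hx y hy (fun e => huv (by rw [e]))
          refine ⟨k + 1, by omega, ?_⟩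
          rwa [Function.iterate_succ_apply, Function.iterate_succ_apply, hqf x (hSJ x hx),
            hqf y (hSJ y hy)]
  obtain ⟨S, hS, hSJ, hsep⟩ := key n
  have hnet : IsDynNetIn f (Icc (-1) 1) {p : ℝ × ℝ | dist p.1 p.2 < (b - a) / 2} n S := by
    refine ⟨fun x hx => hJ (hSJ x hx), ?_⟩
    intro x hx y hy hxy
    rw [Function.onFun, Set.disjoint_left]
    intro z hz hz'
    obtain ⟨k, hk, hd⟩ := hsep x hx y hy hxy
    have h1 : dist (f^[k] x) (f^[k] z) < (b - a) / 2 := by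
      have := hz
      simp only [UniformSpace.ball, mem_preimage, dynEntourage, mem_iInter] at this
      simpa using this k hk
    have h3 : dist (f^[k] y) (f^[k] z) < (b - a) / 2 := by
      have := hz'
      simp only [UniformSpace.ball, mem_preimage, dynEntourage, mem_iInter] at this
      simpa using this k hk
    have h4 := dist_triangle_right (f^[k] x) (f^[k] y) (f^[k] z)
    rw [Real.dist_eq (f^[k] x) (f^[k] y)] at h4
    linarith
  have h1 := ENat.toENNReal_mono hnet.card_le_netMaxcard
  rw [hS] at h1
  simpa using h1

/-- Observation 4.h: for `μ > 0` and `t > 2`, the normal-form map `f_{μ,t}` preserves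
`[−1,1]` and the topological entropy of the induced self-map of `[−1,1]` is `log 2`. -/
theorem entropy_log_two_above_line (μ t : ℝ) (hμ : 0 < μ) (ht : 2 < t) :
    ∃ hmaps : Set.MapsTo
        (fun x : ℝ => 2 * μ * x * (t * x + 2) / (μ ^ 2 * x ^ 2 + (t * x + 2) ^ 2))
        (Set.Icc (-1 : ℝ) 1) (Set.Icc (-1 : ℝ) 1),
      Dynamics.coverEntropy (Set.MapsTo.restrict _ _ _ hmaps) Set.univ
        = (Real.log 2 : EReal) := by
  have hden : ∀ x : ℝ, 0 < μ ^ 2 * x ^ 2 + (t * x + 2) ^ 2 := by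
    intro x
    rcases eq_or_ne x 0 with rfl | hx
    · norm_num
    · have : 0 < μ ^ 2 * x ^ 2 := by positivity
      nlinarith [sq_nonneg (t * x + 2)]
  have hmaps : Set.MapsTo
        (fun x : ℝ => 2 * μ * x * (t * x + 2) / (μ ^ 2 * x ^ 2 + (t * x + 2) ^ 2))
        (Set.Icc (-1 : ℝ) 1) (Set.Icc (-1 : ℝ) 1) := by
    intro x _
    constructor
    · simp only
      rw [le_div_iff₀ (hden x)]
      nlinarith [sq_nonneg (μ * x + (t * x + 2))]
    · simp only
      rw [div_le_iff₀ (hden x)]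
      nlinarith [sq_nonneg (μ * x - (t * x + 2))]
  refine ⟨hmaps, ?_⟩
  rw [coverEntropy_restrict hmaps]
  set f : ℝ → ℝ := fun x => 2 * μ * x * (t * x + 2) / (μ ^ 2 * x ^ 2 + (t * x + 2) ^ 2) with hfdef
  have hcont : Continuous f := by
    apply Continuous.div (by fun_prop) (by fun_prop)
    intro x
    exact (hden x).ne'
  have ht0 : 0 < t := by linarith
  apply le_antisymm
  · apply aux_upper f hcont hmaps
    intro S y hS
    by_contra hcard
    push Not at hcard
    obtain ⟨x₁, x₂, x₃, h1, h2, h3, h12, h13, h23⟩ := Finset.two_lt_card_iff.1 hcard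
    have hq : ∀ x ∈ S, (y * (μ ^ 2 + t ^ 2) - 2 * μ * t) * x ^ 2 + (4 * t * y - 4 * μ) * x + 4 * y
        = 0 := by
      intro x hx
      have := hS x hx
      simp only [hfdef] at this
      rw [div_eq_iff (hden x).ne'] at this
      linear_combination -this
    have e1 := hq _ h1
    have e2 := hq _ h2
    have e3 := hq _ h3
    set A := y * (μ ^ 2 + t ^ 2) - 2 * μ * t with hAdef
    set B := 4 * t * y - 4 * μ with hBdef
    have d12 : A * (x₁ + x₂) + B = 0 := by
      apply mul_left_cancel₀ (sub_ne_zero.2 h12)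
      linear_combination e1 - e2
    have d13 : A * (x₁ + x₃) + B = 0 := by
      apply mul_left_cancel₀ (sub_ne_zero.2 h13)
      linear_combination e1 - e3
    have hA0 : A = 0 := by
      apply mul_left_cancel₀ (sub_ne_zero.2 h23)
      linear_combination d12 - d13
    have hB0 : B = 0 := by rw [hA0] at d12; linarith
    have hy0 : y = 0 := by rw [hA0, hB0] at e1; linarith
    rw [hBdef, hy0] at hB0
    linarith
  · have hf0 : f 0 = 0 := by simp [hfdef]
    have hfm : f (-2 / t) = 0 := by
      have : t * (-2 / t) + 2 = 0 := by field_simp; ring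
      simp only [hfdef, this]; simp
    have hfc : f (-2 / (t + μ)) = -1 := by
      have hs : (t + μ) ≠ 0 := by positivity
      simp only [hfdef]
      rw [div_eq_iff (hden _).ne']
      field_simp
      ring
    have hm1 : -1 < -2 / t := by rw [lt_div_iff₀ ht0]; linarith
    have hm0 : -2 / t < 0 := div_neg_of_neg_of_pos (by norm_num) ht0
    have hc0 : -2 / (t + μ) ≤ 0 := (div_neg_of_neg_of_pos (by norm_num) (by positivity)).le
    have hmc : -2 / t ≤ -2 / (t + μ) := by
      rw [div_le_div_iff₀ ht0 (by positivity)]; linarith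
    set m := -2 / t with hmdef
    set c := -2 / (t + μ) with hcdef
    obtain ⟨a, ha, hfa⟩ := intermediate_value_Icc' hmc hcont.continuousOn
      (show m ∈ Icc (f c) (f m) by rw [hfc, hfm]; exact ⟨hm1.le, hm0.le⟩)
    obtain ⟨b, hb, hfb⟩ := intermediate_value_Icc hc0 hcont.continuousOn
      (show m ∈ Icc (f c) (f 0) by rw [hfc, hf0]; exact ⟨hm1.le, hm0.le⟩)
    have hac : a ≠ c := by
      rintro rfl
      linarith
    have hab : a < b := lt_of_lt_of_le (lt_of_le_of_ne ha.2 hac) hb.1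
    refine aux_lower f (Icc m 0) (Icc_subset_Icc hm1.le zero_le_one) ⟨0, hm0.le, le_rfl⟩ a b hab
      ?_ ?_
    · intro y hy
      obtain ⟨x, hx, hxy⟩ := intermediate_value_Icc' ha.1 hcont.continuousOn
        (show y ∈ Icc (f a) (f m) by rw [hfa, hfm]; exact hy)
      exact ⟨x, ⟨hx.1, by linarith [hx.2, ha.2]⟩, hx.2, hxy⟩
    · intro y hy
      obtain ⟨x, hx, hxy⟩ := intermediate_value_Icc hb.2 hcont.continuousOn
        (show y ∈ Icc (f b) (f 0) by rw [hfb, hf0]; exact hy)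
      exact ⟨x, ⟨by linarith [hx.1, hb.1], hx.2⟩, hx.1, hxy⟩
end

section
/- For real parameters μ < −4 and t < 0 with t²/4 + μ − 1 > 0 (the parameter lies outside the parabola μ = 1 − t²/4), define f_{μ,t} : ℝ → ℝ by f_{μ,t}(x) = 2μx(tx+2)/(μ²x² + (tx+2)²). Then there exists a real number c with 0 < c, f_{μ,t}(c) = c, and c < f_{μ,t}(−1) = 2μ(t−2)/(μ² + (t−2)²). -/
/-- Observation 4.i, key inequality: for `μ < −4`, `t < 0` outside the parabola, the map
`f_{μ,t}` has a positive fixed point `c` with `c < f_{μ,t}(−1) = 2μ(t−2)/(μ²+(t−2)²)`. -/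
theorem positive_fixed_point_below_image (μ t : ℝ) (hμ : μ < -4) (ht : t < 0)
    (hpar : 0 < t ^ 2 / 4 + μ - 1) :
    let f : ℝ → ℝ := fun x => 2 * μ * x * (t * x + 2) / (μ ^ 2 * x ^ 2 + (t * x + 2) ^ 2)
    ∃ c : ℝ, 0 < c ∧ f c = c ∧ c < f (-1) ∧
      f (-1) = 2 * μ * (t - 2) / (μ ^ 2 + (t - 2) ^ 2) := by
  intro f
  obtain ⟨m, rfl⟩ : ∃ m, μ = -m := ⟨-μ, by ring⟩
  obtain ⟨s, rfl⟩ : ∃ s, t = -s := ⟨-t, by ring⟩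
  have hm : 4 < m := by linarith
  have hs : 0 < s := by linarith
  have hd : 0 < s ^ 2 - 4 * m - 4 := by nlinarith
  have hr := Real.sqrt_pos.2 hd
  have hr2 := Real.sq_sqrt hd.le
  set r := Real.sqrt (s ^ 2 - 4 * m - 4) with hrdef
  clear_value r
  have hE : 0 < s * (2 + m) + m * r := by positivity
  have hf1 : f (-1) = 2 * m * (s + 2) / (m ^ 2 + (s + 2) ^ 2) := by
    simp only [f]
    congr 1 <;> ring
  have hcpos : 0 < 4 * (1 + m) / (s * (2 + m) + m * r) := by positivity
  refine ⟨4 * (1 + m) / (s * (2 + m) + m * r), hcpos, ?_, ?_, ?_⟩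
  · have hcE : 4 * (1 + m) / (s * (2 + m) + m * r) * (s * (2 + m) + m * r) = 4 * (1 + m) :=
      div_mul_cancel₀ _ hE.ne'
    have hP : (m ^ 2 + s ^ 2) * (4 * (1 + m)) ^ 2
        - (4 * s + 2 * m * s) * (4 * (1 + m)) * (s * (2 + m) + m * r)
        + 4 * (1 + m) * (s * (2 + m) + m * r) ^ 2 = 0 := by
      linear_combination (4 * (1 + m) * m ^ 2) * hr2
    generalize 4 * (1 + m) / (s * (2 + m) + m * r) = c at *
    have hQ : (m ^ 2 + s ^ 2) * c ^ 2 - (4 * s + 2 * m * s) * c + 4 * (1 + m) = 0 := by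
      have : ((m ^ 2 + s ^ 2) * c ^ 2 - (4 * s + 2 * m * s) * c + 4 * (1 + m))
          * (s * (2 + m) + m * r) ^ 2 = 0 := by
        rw [← hcE] at hP
        rw [← hcE]
        linear_combination hP
      exact (mul_eq_zero.1 this).resolve_right (by positivity)
    simp only [f]
    have hden : (-m) ^ 2 * c ^ 2 + (-s * c + 2) ^ 2 ≠ 0 := by
      have : 0 < (-m) ^ 2 * c ^ 2 := by
        have : (-m) ^ 2 = m ^ 2 := by ring
        rw [this]; positivity
      positivity
    rw [div_eq_iff hden]
    linear_combination (-c) * hQ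
  · rw [hf1]
    have h1 : 4 * (1 + m) / (s * (2 + m) + m * r) < 4 * (1 + m) / (s * (2 + m)) := by
      apply div_lt_div_of_pos_left <;> first | positivity | nlinarith [mul_pos (by linarith : 0 < m) hr]
    refine h1.trans ?_
    rw [div_lt_div_iff₀ (by positivity) (by positivity)]
    have a1 : 0 < (m ^ 2 - 2) * (s ^ 2 - 4 * m - 4) := mul_pos (by nlinarith) hd
    have a2 : 0 < (2 * m ^ 2 - 4 * m - 8) * s := mul_pos (by nlinarith) hs
    have a3 : 0 < (m + 1) * (m ^ 2 - 8) := mul_pos (by linarith) (by nlinarith)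
    nlinarith
  · simp only [f]
    congr 1 <;> ring
end

section
/- For real parameters μ > 0 and t with 0 < t < 2 and μ + t > 2, define f_{μ,t} : ℝ → ℝ by f_{μ,t}(x) = 2μx(tx+2)/(μ²x² + (tx+2)²). Then −1 < −2/(μ+t) < 0, f_{μ,t} maps the interval [−1,0] into itself, f_{μ,t} is strictly decreasing on [−1, −2/(μ+t)], and f_{μ,t} is strictly increasing on [−2/(μ+t), 0]; in particular the restriction of f_{μ,t} to [−1,0] is a unimodal self-map with unique turning point −2/(μ+t). -/
/-- The family `𝓕₁`: for `μ, t > 0` with `2 − μ < t < 2`, the normal-form map `f_{μ,t}`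
restricts to a unimodal self-map of `[−1,0]` with unique turning point `−2/(μ+t)`. -/
theorem unimodal_family_one (μ t : ℝ) (hμ : 0 < μ) (ht0 : 0 < t) (ht2 : t < 2)
    (hsum : 2 < μ + t) :
    let f : ℝ → ℝ := fun x => 2 * μ * x * (t * x + 2) / (μ ^ 2 * x ^ 2 + (t * x + 2) ^ 2)
    (-1 < -2 / (μ + t) ∧ -2 / (μ + t) < 0) ∧
    Set.MapsTo f (Set.Icc (-1 : ℝ) 0) (Set.Icc (-1 : ℝ) 0) ∧
    StrictAntiOn f (Set.Icc (-1 : ℝ) (-2 / (μ + t))) ∧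
    StrictMonoOn f (Set.Icc (-2 / (μ + t)) (0 : ℝ)) := by
  intro f
  have hs : 0 < μ + t := by linarith
  have h1 : -1 < -2 / (μ + t) := by rw [lt_div_iff₀ hs]; linarith
  have h2 : -2 / (μ + t) < 0 := by rw [div_lt_iff₀ hs]; linarith
  have hb : ∀ x : ℝ, -1 ≤ x → 0 < t * x + 2 := fun x hx => by nlinarith
  have hd : ∀ x : ℝ, -1 ≤ x → 0 < μ ^ 2 * x ^ 2 + (t * x + 2) ^ 2 := fun x hx => by
    have := hb x hx
    positivity
  have key : ∀ x y : ℝ, 2 * μ * y * (t * y + 2) * (μ ^ 2 * x ^ 2 + (t * x + 2) ^ 2)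
      - 2 * μ * x * (t * x + 2) * (μ ^ 2 * y ^ 2 + (t * y + 2) ^ 2)
      = 4 * μ * ((y - x) * ((t * x + 2) * (t * y + 2) - (μ * x) * (μ * y))) := by
    intro x y; ring
  refine ⟨⟨h1, h2⟩, ?_, ?_, ?_⟩
  · rintro x ⟨hx1, hx0⟩
    have hbx := hb x hx1
    have hdx := hd x hx1
    refine ⟨?_, ?_⟩
    · show -1 ≤ _ / _
      rw [le_div_iff₀ hdx]
      nlinarith [sq_nonneg (μ * x + (t * x + 2))]
    · show _ / _ ≤ (0 : ℝ)
      apply div_nonpos_of_nonpos_of_nonneg _ hdx.le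
      have : 0 ≤ μ * (-x) * (t * x + 2) :=
        mul_nonneg (mul_nonneg hμ.le (by linarith)) hbx.le
      linarith
  · rintro x ⟨hx1, hx0⟩ y ⟨hy1, hy0⟩ hxy
    show _ / _ < _ / _
    rw [div_lt_div_iff₀ (hd y hy1) (hd x hx1)]
    rw [le_div_iff₀ hs] at hy0
    have hbx := hb x hx1
    have hby := hb y hy1
    have e1 : t * x + 2 < -(μ * x) := by nlinarith
    have e2 : t * y + 2 ≤ -(μ * y) := by nlinarith
    have e3 : (t * x + 2) * (t * y + 2) < -(μ * x) * -(μ * y) :=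
      mul_lt_mul e1 e2 hby (by linarith)
    have e4 : 0 < μ * ((y - x) * ((μ * x) * (μ * y) - (t * x + 2) * (t * y + 2))) :=
      mul_pos hμ (mul_pos (by linarith) (by linarith))
    linarith [key x y]
  · rintro x ⟨hx1, hx0⟩ y ⟨hy1, hy0⟩ hxy
    show _ / _ < _ / _
    have hx1' : -1 ≤ x := by linarith
    have hy1' : -1 ≤ y := by linarith
    rw [div_lt_div_iff₀ (hd x hx1') (hd y hy1')]
    rw [div_le_iff₀ hs] at hx1
    have hbx := hb x hx1'
    have e0 : 0 ≤ -(μ * y) := by nlinarith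
    have e1 : -(μ * x) ≤ t * x + 2 := by nlinarith
    have e2 : -(μ * y) < t * y + 2 := by nlinarith
    have e3 : -(μ * x) * -(μ * y) < (t * x + 2) * (t * y + 2) :=
      mul_lt_mul' e1 e2 e0 hbx
    have e4 : 0 < μ * ((y - x) * ((t * x + 2) * (t * y + 2) - (μ * x) * (μ * y))) :=
      mul_pos hμ (mul_pos (by linarith) (by linarith))
    linarith [key x y]
end

section
/- For real parameters μ ≠ 0 and t, define f_{μ,t} : ℝ → ℝ by f_{μ,t}(x) = 2μx(tx+2)/(μ²x² + (tx+2)²). If c ≠ 0 is a fixed point of f_{μ,t} (i.e., f_{μ,t}(c) = c), then tc + 2 ≠ 0 and the derivative of f_{μ,t} at c equals 2/μ − 2/(tc+2). If moreover μ > 2, t > 0, and c > 0, then |f_{μ,t}'(c)| < 1, i.e., c is an attracting fixed point. -/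
/-- The multiplier formula of observation 4.j: at a nonzero fixed point `c` of `f_{μ,t}`
one has `f_{μ,t}'(c) = 2/μ − 2/(tc+2)`; and for `μ > 2`, `t > 0`, `c > 0` the fixed point
is attracting. -/
theorem multiplier_formula_at_fixed_point (μ t : ℝ) (hμ : μ ≠ 0) (c : ℝ) (hc : c ≠ 0)
    (hfix : 2 * μ * c * (t * c + 2) / (μ ^ 2 * c ^ 2 + (t * c + 2) ^ 2) = c) :
    t * c + 2 ≠ 0 ∧
    deriv (fun x : ℝ => 2 * μ * x * (t * x + 2) / (μ ^ 2 * x ^ 2 + (t * x + 2) ^ 2)) c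
      = 2 / μ - 2 / (t * c + 2) ∧
    (2 < μ → 0 < t → 0 < c →
      |deriv (fun x : ℝ => 2 * μ * x * (t * x + 2) / (μ ^ 2 * x ^ 2 + (t * x + 2) ^ 2)) c|
        < 1) := by
  have hD : 0 < μ ^ 2 * c ^ 2 + (t * c + 2) ^ 2 := by positivity
  have hs : t * c + 2 ≠ 0 := by
    intro h
    rw [h] at hfix
    simp at hfix
    exact hc hfix.symm
  have hE : 2 * μ * (t * c + 2) = μ ^ 2 * c ^ 2 + (t * c + 2) ^ 2 := by
    rw [div_eq_iff hD.ne'] at hfix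
    apply mul_left_cancel₀ hc
    linarith
  have h1 : HasDerivAt (fun x : ℝ => t * x + 2) t c := by
    simpa using ((hasDerivAt_id c).const_mul t).add_const 2
  have h2 : HasDerivAt (fun x : ℝ => 2 * μ * x) (2 * μ) c := by
    simpa using (hasDerivAt_id c).const_mul (2 * μ)
  have h3 : HasDerivAt (fun x : ℝ => μ ^ 2 * x ^ 2) (μ ^ 2 * (2 * c)) c := by
    simpa using (hasDerivAt_pow 2 c).const_mul (μ ^ 2)
  have h4 : HasDerivAt (fun x : ℝ => (t * x + 2) ^ 2) (2 * (t * c + 2) * t) c := by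
    have h := h1.pow 2
    norm_num at h
    exact h
  have hder : deriv (fun x : ℝ => 2 * μ * x * (t * x + 2) / (μ ^ 2 * x ^ 2 + (t * x + 2) ^ 2)) c
      = 2 / μ - 2 / (t * c + 2) := by
    have h5 := ((h2.mul h1).div (h3.add h4) hD.ne').deriv
    refine Eq.trans h5 ?_
    simp only [Pi.mul_apply, Pi.add_apply]
    rw [← hE]
    obtain ⟨s, hsd⟩ : ∃ s, s = t * c + 2 := ⟨_, rfl⟩
    rw [← hsd] at hs hE ⊢
    rw [div_eq_iff (by positivity), sub_mul]
    field_simp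
    have ht : t * c = s - 2 := by linarith
    linear_combination (μ - s) * ht + hE
  refine ⟨hs, hder, fun hm ht hc0 => ?_⟩
  rw [hder]
  have hp : 0 < t * c := mul_pos ht hc0
  have a1 : 2 / μ < 1 := by rw [div_lt_one (by linarith)]; exact hm
  have a2 : 0 < 2 / μ := by positivity
  have a3 : 2 / (t * c + 2) < 1 := by rw [div_lt_one (by linarith)]; linarith
  have a4 : 0 < 2 / (t * c + 2) := by positivity
  rw [abs_lt]
  constructor <;> linarith
end

section
/- For real parameters μ > 2 and t > 0, define f_{μ,t} : ℝ → ℝ by f_{μ,t}(x) = 2μx(tx+2)/(μ²x² + (tx+2)²). Then f_{μ,t} has exactly one positive fixed point c (there exists a unique c > 0 with f_{μ,t}(c) = c), the interval (0,∞) is invariant under f_{μ,t}, and for every x > 0 the iterates f_{μ,t}^[n](x) converge to c as n → ∞. -/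
open Filter

lemma aux_exists_c (μ t : ℝ) (hμ : 2 < μ) (ht : 0 < t) :
    ∃ c : ℝ, 0 < c ∧ μ = 1 + t * c + c ^ 2 := by
  have hs : Real.sqrt (t ^ 2 + 4 * (μ - 1)) ^ 2 = t ^ 2 + 4 * (μ - 1) :=
    Real.sq_sqrt (by nlinarith)
  have hlt : t < Real.sqrt (t ^ 2 + 4 * (μ - 1)) :=
    Real.lt_sqrt_of_sq_lt (by linarith)
  refine ⟨(Real.sqrt (t ^ 2 + 4 * (μ - 1)) - t) / 2, by linarith, ?_⟩
  nlinarith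

lemma aux_contr_s16 (μ t c : ℝ) (ht : 0 < t) (hc : 0 < c) (hμ : μ = 1 + t * c + c ^ 2)
    (u : ℝ) (hu : 0 < u) :
    (μ * u / (1 + t * u + u ^ 2) - c) ^ 2 / (μ * u / (1 + t * u + u ^ 2)) ≤
      max 1 (c ^ 2) / (1 + c ^ 2) * ((u - c) ^ 2 / u) := by
  have hμ0 : 0 < μ := by rw [hμ]; positivity
  have hq : 0 < 1 + t * u + u ^ 2 := by positivity
  have e : (μ * u / (1 + t * u + u ^ 2) - c) ^ 2 / (μ * u / (1 + t * u + u ^ 2)) =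
      (1 - u * c) ^ 2 / (μ * (1 + t * u + u ^ 2)) * ((u - c) ^ 2 / u) := by
    field_simp
    rw [hμ]; ring
  rw [e]
  apply mul_le_mul_of_nonneg_right _ (by positivity)
  have h1 : (1:ℝ) ≤ max 1 (c ^ 2) := le_max_left _ _
  have h2 : c ^ 2 ≤ max 1 (c ^ 2) := le_max_right _ _
  set M := max 1 (c ^ 2)
  have huc : 0 < u * c := mul_pos hu hc
  have h3 : (1 - u * c) ^ 2 ≤ M * (1 + u ^ 2) := by
    nlinarith [mul_le_mul_of_nonneg_right h2 (sq_nonneg u)]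
  have h4 : (1 + c ^ 2) ≤ μ := by rw [hμ]; nlinarith [mul_pos ht hc]
  have h5 : 1 + u ^ 2 ≤ 1 + t * u + u ^ 2 := by nlinarith [mul_pos ht hu]
  rw [div_le_div_iff₀ (by positivity) (by positivity)]
  calc (1 - u * c) ^ 2 * (1 + c ^ 2) ≤ (M * (1 + t * u + u ^ 2)) * μ := by
        apply mul_le_mul _ h4 (by positivity) (by positivity)
        exact h3.trans (mul_le_mul_of_nonneg_left h5 (by linarith))
    _ = _ := by ring

lemma aux_tendsto_s16 (μ t c : ℝ) (ht : 0 < t) (hc : 0 < c) (hμ : μ = 1 + t * c + c ^ 2)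
    (u : ℕ → ℝ) (hu : ∀ n, 0 < u n) (hb : ∀ n, u n ≤ μ / t)
    (hr : ∀ n, u (n + 1) = μ * u n / (1 + t * u n + u n ^ 2)) :
    Tendsto u atTop (nhds c) := by
  set k := max 1 (c ^ 2) / (1 + c ^ 2) with hk
  have hk0 : 0 ≤ k := by positivity
  have hk1 : k < 1 := by
    rw [hk, div_lt_one (by positivity)]
    exact max_lt (by nlinarith) (by linarith)
  have hW : ∀ n, (u n - c) ^ 2 / u n ≤ k ^ n * ((u 0 - c) ^ 2 / u 0) := by
    intro n
    induction n with
    | zero => simp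
    | succ n ih =>
      have := aux_contr_s16 μ t c ht hc hμ (u n) (hu n)
      rw [← hr] at this
      calc _ ≤ _ := this
        _ ≤ k * (k ^ n * ((u 0 - c) ^ 2 / u 0)) := mul_le_mul_of_nonneg_left ih hk0
        _ = _ := by ring
  have hsq : Tendsto (fun n => (u n - c) ^ 2) atTop (nhds 0) := by
    have hl : Tendsto (fun n : ℕ => k ^ n * ((u 0 - c) ^ 2 / u 0 * (μ / t))) atTop (nhds 0) := by
      simpa using (tendsto_pow_atTop_nhds_zero_of_lt_one hk0 hk1).mul_const
        ((u 0 - c) ^ 2 / u 0 * (μ / t))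
    refine squeeze_zero (fun n => sq_nonneg _) (fun n => ?_) hl
    have h0 := hu n
    have h00 := hu 0
    calc (u n - c) ^ 2 = (u n - c) ^ 2 / u n * u n := by field_simp
      _ ≤ (k ^ n * ((u 0 - c) ^ 2 / u 0)) * (μ / t) :=
        mul_le_mul (hW n) (hb n) h0.le (by positivity)
      _ = _ := by ring
  have habs : Tendsto (fun n => |u n - c|) atTop (nhds 0) := by
    have := (Real.continuous_sqrt.tendsto 0).comp hsq
    simpa [Function.comp_def, Real.sqrt_sq_eq_abs] using this
  rw [tendsto_iff_dist_tendsto_zero]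
  simpa [Real.dist_eq] using habs

/-- Observation 4.j: for `μ > 2` and `t > 0`, the map `f_{μ,t}` has a unique positive
fixed point `c`, preserves `(0,∞)`, and every orbit starting in `(0,∞)` converges to `c`. -/
theorem positive_orbits_converge (μ t : ℝ) (hμ : 2 < μ) (ht : 0 < t) :
    let f : ℝ → ℝ := fun x => 2 * μ * x * (t * x + 2) / (μ ^ 2 * x ^ 2 + (t * x + 2) ^ 2)
    ∃ c : ℝ, 0 < c ∧ f c = c ∧ (∀ c' : ℝ, 0 < c' → f c' = c' → c' = c) ∧
      (∀ x : ℝ, 0 < x → 0 < f x) ∧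
      (∀ x : ℝ, 0 < x → Tendsto (fun n => f^[n] x) atTop (nhds c)) := by
  intro f
  obtain ⟨c, hc, hμc⟩ := aux_exists_c μ t hμ ht
  have hμ0 : 0 < μ := by linarith
  have hpos : ∀ x : ℝ, 0 < x → 0 < f x := fun x hx => by
    simp only [f]; positivity
  have hf : ∀ x : ℝ, 0 < x →
      f x = 2 * (μ * x / (t * x + 2)) / (1 + (μ * x / (t * x + 2)) ^ 2) := fun x hx => by
    have : 0 < t * x + 2 := by positivity
    simp only [f]; field_simp; try ring
  have hφ : ∀ u : ℝ, 0 < u → μ * (2 * u / (1 + u ^ 2)) / (t * (2 * u / (1 + u ^ 2)) + 2) =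
      μ * u / (1 + t * u + u ^ 2) := fun u hu => by
    have h1 : t * (2 * u / (1 + u ^ 2)) + 2 = 2 * (1 + t * u + u ^ 2) / (1 + u ^ 2) := by
      field_simp; ring
    rw [h1]; field_simp
  have hlim : ∀ x : ℝ, 0 < x →
      Tendsto (fun n => f^[n] x) atTop (nhds (2 * c / (1 + c ^ 2))) := by
    intro x hx
    have hp : ∀ n, 0 < f^[n] x := fun n => by
      induction n with
      | zero => simpa
      | succ n ih => rw [Function.iterate_succ_apply']; exact hpos _ ih
    have hu : ∀ n, 0 < μ * f^[n] x / (t * f^[n] x + 2) := fun n => by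
      have := hp n
      positivity
    have key := aux_tendsto_s16 μ t c ht hc hμc (fun n => μ * f^[n] x / (t * f^[n] x + 2)) hu
      (fun n => by
        have := hp n
        rw [div_le_div_iff₀ (by positivity) ht]
        nlinarith)
      (fun n => by
        simp only [Function.iterate_succ_apply']
        rw [hf _ (hp n), hφ _ (hu n)])
    rw [← tendsto_add_atTop_iff_nat 1]
    have h2 := (key.const_mul 2).div ((key.pow 2).const_add 1) (by positivity)
    refine h2.congr (fun n => ?_)
    rw [Function.iterate_succ_apply', hf _ (hp n)]
    rfl
  have hC : 0 < 2 * c / (1 + c ^ 2) := by positivity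
  refine ⟨2 * c / (1 + c ^ 2), hC, ?_, ?_, hpos, hlim⟩
  · rw [hf _ hC, hφ c hc, ← hμc, mul_div_cancel_left₀ _ hμ0.ne']
  · intro c' hc' hfix
    have h := hlim c' hc'
    simp only [Function.iterate_fixed hfix] at h
    exact tendsto_nhds_unique tendsto_const_nhds h
end

section
/- For real parameters μ > 0 and t with 0 < t < 2 and μ + t > 2, define f_{μ,t} : ℝ → ℝ by f_{μ,t}(x) = 2μx(tx+2)/(μ²x² + (tx+2)²); it maps the interval [0,1] into itself. Then the topological entropy of the induced self-map of [0,1] equals 0. -/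
open Filter Topology in
lemma poly_growth (u : ℕ → ENNReal) (N : ℕ)
    (h : ∀ n, u n ≤ (((n + 1) * (2 * (n * N) + 1) : ℕ) : ENNReal)) :
    ExpGrowth.expGrowthSup u ≤ 0 := by
  rw [ExpGrowth.expGrowthSup_le_iff]
  intro b hb
  obtain ⟨r, hr0, hrb⟩ := EReal.lt_iff_exists_real_btwn.1 hb
  have hr : 0 < r := by exact_mod_cast hr0
  have h1 := tendsto_pow_const_div_const_pow_of_one_lt 2 (Real.one_lt_exp_iff.2 hr)
  have hC : (0 : ℝ) < 1 / (2 * (2 * N + 1)) := by positivity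
  filter_upwards [h1.eventually (gt_mem_nhds hC), eventually_ge_atTop 1] with n hn hn1
  have hn1' : (1 : ℝ) ≤ n := by exact_mod_cast hn1
  have key : (((n + 1) * (2 * (n * N) + 1) : ℕ) : ℝ) ≤ Real.exp (r * n) := by
    rw [div_lt_div_iff₀ (by positivity) (by positivity), ← Real.exp_nat_mul] at hn
    rw [mul_comm r]
    push_cast
    have hN : (0 : ℝ) ≤ N := by positivity
    nlinarith [mul_nonneg hN (sub_nonneg.2 hn1'), mul_nonneg (mul_nonneg hN (sub_nonneg.2 hn1')) (by linarith : (0 : ℝ) ≤ n)]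
  refine (h n).trans ?_
  have : EReal.exp ((r : EReal) * n) ≤ EReal.exp (b * n) := by
    apply EReal.exp_monotone
    gcongr
  refine le_trans ?_ this
  have e : ((r : EReal) * n) = ((r * n : ℝ) : EReal) := by push_cast; rfl
  rw [e, EReal.exp_coe, ← ENNReal.ofReal_natCast]
  exact ENNReal.ofReal_le_ofReal key

open Classical in
lemma entropy_general (T : Set.Icc (0 : ℝ) 1 → Set.Icc (0 : ℝ) 1) (R : Set (Set.Icc (0 : ℝ) 1))
    (hR : ∀ x ∈ R, T x ∈ R) (hm : MonotoneOn T Rᶜ) (ha : AntitoneOn T R) :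
    Dynamics.coverEntropy T Set.univ = (0 : EReal) := by
  apply le_antisymm _ (Dynamics.coverEntropy_nonneg T Set.univ_nonempty)
  rw [Dynamics.coverEntropy_eq_iSup_basis_netEntropyEntourage Metric.uniformity_basis_dist]
  refine iSup₂_le fun ε hε => ?_
  obtain ⟨N, hN⟩ := exists_nat_gt (1 / ε)
  have hN0 : (0 : ℝ) < N := lt_trans (by positivity) hN
  refine poly_growth _ N fun n => ?_
  -- combinatorial bound
  suffices H : ∀ s : Finset (Set.Icc (0 : ℝ) 1), Dynamics.IsDynNetIn T Set.univ
      {p | dist p.1 p.2 < ε} n s → s.card ≤ (n + 1) * (2 * (n * N) + 1) by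
    have : Dynamics.netMaxcard T Set.univ {p | dist p.1 p.2 < ε} n
        ≤ (((n + 1) * (2 * (n * N) + 1) : ℕ) : ℕ∞) :=
      iSup₂_le fun s hs => by exact_mod_cast H s hs
    have h2 := ENat.toENNReal_le.2 this
    simpa using h2
  intro s hs
  -- number of times outside `R`
  let M : Set.Icc (0 : ℝ) 1 → ℕ := fun x => ((Finset.range n).filter fun j => T^[j] x ∉ R).card
  have hinv : ∀ x i j, i ≤ j → T^[i] x ∈ R → T^[j] x ∈ R := by
    intro x i j hij hi
    induction j, hij using Nat.le_induction with
    | base => exact hi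
    | succ j _ ih => rw [Function.iterate_succ_apply']; exact hR _ ih
  have hM : ∀ x j, j < n → (T^[j] x ∉ R ↔ j < M x) := by
    intro x j hj
    constructor
    · intro h
      have : Finset.range (j + 1) ⊆ (Finset.range n).filter fun j => T^[j] x ∉ R := by
        intro i hi
        simp only [Finset.mem_range, Finset.mem_filter] at hi ⊢
        exact ⟨by omega, fun h' => h (hinv x i j (by omega) h')⟩
      have := Finset.card_le_card this
      simp only [Finset.card_range] at this
      exact this
    · intro h h'
      have : ((Finset.range n).filter fun j => T^[j] x ∉ R) ⊆ Finset.range j := by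
        intro i hi
        simp only [Finset.mem_range, Finset.mem_filter] at hi ⊢
        by_contra hc
        exact hi.2 (hinv x j i (by omega) h')
      have := Finset.card_le_card this
      simp only [Finset.card_range] at this
      exact absurd h (not_lt.2 this)
  have hMn : ∀ x, M x ≤ n := fun x => by
    simpa using Finset.card_filter_le (Finset.range n) fun j => T^[j] x ∉ R
  have hmono : ∀ m k, k < n → MonotoneOn T^[k] {x | M x = m} ∨ AntitoneOn T^[k] {x | M x = m} := by
    intro m k
    induction k with
    | zero => intro _; left; intro x _ y _ h; exact h
    | succ k ih =>
      intro hk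
      have hk' : k < n := by omega
      by_cases hkm : k < m
      · have hout : ∀ x ∈ {x | M x = m}, T^[k] x ∈ Rᶜ := fun x hx =>
          (hM x k hk').2 (by rw [hx]; exact hkm)
        rcases ih hk' with h | h
        · left; intro x hx y hy hxy
          simp only [Function.iterate_succ_apply']
          exact hm (hout x hx) (hout y hy) (h hx hy hxy)
        · right; intro x hx y hy hxy
          simp only [Function.iterate_succ_apply']
          exact hm (hout y hy) (hout x hx) (h hx hy hxy)
      · have hin : ∀ x ∈ {x | M x = m}, T^[k] x ∈ R := fun x hx => by
          by_contra hc
          have := (hM x k hk').1 hc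
          rw [hx] at this
          exact hkm this
        rcases ih hk' with h | h
        · right; intro x hx y hy hxy
          simp only [Function.iterate_succ_apply']
          exact ha (hin x hx) (hin y hy) (h hx hy hxy)
        · left; intro x hx y hy hxy
          simp only [Function.iterate_succ_apply']
          exact ha (hin y hy) (hin x hx) (h hx hy hxy)
  let q : ℕ → Set.Icc (0 : ℝ) 1 → ℤ := fun k x => ⌊(N : ℝ) * (T^[k] x : ℝ)⌋
  have hq0 : ∀ k x, 0 ≤ q k x := fun k x =>
    Int.floor_nonneg.2 (mul_nonneg hN0.le (T^[k] x).2.1)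
  have hqN : ∀ k x, q k x ≤ N := fun k x => by
    have : (q k x : ℝ) ≤ N := (Int.floor_le _).trans (mul_le_of_le_one_right hN0.le (T^[k] x).2.2)
    exact_mod_cast this
  have hqm : ∀ k x y, T^[k] x ≤ T^[k] y → q k x ≤ q k y := fun k x y h =>
    Int.floor_le_floor (mul_le_mul_of_nonneg_left h hN0.le)
  have hσ : ∀ m k, ∃ σ : ℤ, (σ = 1 ∨ σ = -1) ∧ (k < n → ∀ x y, M x = m → M y = m → x ≤ y →
      σ * q k x ≤ σ * q k y) := by
    intro m k
    by_cases hk : k < n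
    · rcases hmono m k hk with h | h
      · refine ⟨1, Or.inl rfl, fun _ x y hx hy hxy => ?_⟩
        have := hqm k x y (h hx hy hxy)
        linarith
      · refine ⟨-1, Or.inr rfl, fun _ x y hx hy hxy => ?_⟩
        have := hqm k y x (h hx hy hxy)
        linarith
    · exact ⟨1, Or.inl rfl, fun h => absurd h hk⟩
  choose σ hσ1 hσ2 using hσ
  let key : Set.Icc (0 : ℝ) 1 → ℕ × ℤ := fun x =>
    (M x, ∑ k ∈ Finset.range n, σ (M x) k * q k x)
  have hcard : ((Finset.range (n + 1)) ×ˢ (Finset.Icc (-((n * N : ℕ) : ℤ)) ((n * N : ℕ) : ℤ))).card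
      = (n + 1) * (2 * (n * N) + 1) := by
    rw [Finset.card_product, Finset.card_range, Int.card_Icc]
    congr 1
    omega
  rw [← hcard]
  have habs : ∀ m k x, |σ m k * q k x| ≤ N := by
    intro m k x
    have h1 : |σ m k| = 1 := by rcases hσ1 m k with h | h <;> simp [h]
    rw [abs_mul, h1, one_mul, abs_of_nonneg (hq0 k x)]
    exact hqN k x
  have hclose : ∀ x y, x ≤ y → key x = key y → ∀ k < n, dist (T^[k] x) (T^[k] y) < ε := by
    intro x y hxy hk k hkn
    have h1 : M x = M y := congrArg Prod.fst hk
    have h2 : ∑ k ∈ Finset.range n, σ (M x) k * q k x = ∑ k ∈ Finset.range n, σ (M y) k * q k y :=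
      congrArg Prod.snd hk
    rw [← h1] at h2
    have h3 := (Finset.sum_eq_sum_iff_of_le (fun k hk =>
      hσ2 (M x) k (Finset.mem_range.1 hk) x y rfl h1.symm hxy)).1 h2 k (Finset.mem_range.2 hkn)
    have h4 : q k x = q k y := by
      rcases hσ1 (M x) k with h | h <;> rw [h] at h3 <;> linarith
    have h5 := Int.abs_sub_lt_one_of_floor_eq_floor h4
    rw [← mul_sub, abs_mul, abs_of_pos hN0] at h5
    rw [Subtype.dist_eq, Real.dist_eq]
    rw [div_lt_iff₀ hε] at hN
    by_contra hc
    have := mul_le_mul_of_nonneg_left (not_lt.1 hc) hN0.le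
    linarith
  apply Finset.card_le_card_of_injOn key
  · intro x _
    rw [Finset.mem_coe, Finset.mem_product, Finset.mem_range, Finset.mem_Icc]
    refine ⟨Nat.lt_succ_of_le (hMn x), ?_⟩
    refine abs_le.1 (?_ : |∑ k ∈ Finset.range n, σ (M x) k * q k x| ≤ ((n * N : ℕ) : ℤ))
    refine (Finset.abs_sum_le_sum_abs _ _).trans ?_
    refine (Finset.sum_le_sum fun k _ => habs (M x) k x).trans ?_
    simp
  · intro x hx y hy hxy
    refine Set.PairwiseDisjoint.elim_set hs.2 hx hy y ?_ ?_
    · rw [Dynamics.mem_ball_dynEntourage]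
      intro k hk
      change dist (T^[k] x) (T^[k] y) < ε
      rcases le_total x y with h | h
      · exact hclose x y h hxy k hk
      · rw [dist_comm]; exact hclose y x h hxy.symm k hk
    · rw [Dynamics.mem_ball_dynEntourage]
      intro k hk
      change dist (T^[k] y) (T^[k] y) < ε
      simpa using hε

/-- Sign formula: comparison of the values of the map. -/
lemma fmap_le (μ a b x y : ℝ) (ha : 0 < a) (hb : 0 < b) (hμ : 0 < μ)
    (h : 0 ≤ (y * a - x * b) * (a * b - μ ^ 2 * x * y)) :
    2 * μ * x * a / (μ ^ 2 * x ^ 2 + a ^ 2) ≤ 2 * μ * y * b / (μ ^ 2 * y ^ 2 + b ^ 2) := by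
  rw [div_le_div_iff₀ (by positivity) (by positivity)]
  have := mul_nonneg hμ.le h
  nlinarith

/-- Observation 4.j: for `μ, t > 0` with `t < 2` and `μ + t > 2`, the normal-form map
`f_{μ,t}` preserves `[0,1]` and the topological entropy of the induced self-map of
`[0,1]` vanishes. -/
theorem entropy_zero_on_right_interval (μ t : ℝ) (hμ : 0 < μ) (ht0 : 0 < t) (ht2 : t < 2)
    (hsum : 2 < μ + t) :
    ∃ hmaps : Set.MapsTo
        (fun x : ℝ => 2 * μ * x * (t * x + 2) / (μ ^ 2 * x ^ 2 + (t * x + 2) ^ 2))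
        (Set.Icc (0 : ℝ) 1) (Set.Icc (0 : ℝ) 1),
      Dynamics.coverEntropy (Set.MapsTo.restrict _ _ _ hmaps) Set.univ = (0 : EReal) := by
  have hmaps : Set.MapsTo
        (fun x : ℝ => 2 * μ * x * (t * x + 2) / (μ ^ 2 * x ^ 2 + (t * x + 2) ^ 2))
        (Set.Icc (0 : ℝ) 1) (Set.Icc (0 : ℝ) 1) := by
    intro x hx
    have hx0 : 0 ≤ x := hx.1
    constructor
    · positivity
    · have : 0 < μ ^ 2 * x ^ 2 + (t * x + 2) ^ 2 := by positivity
      change _ / _ ≤ (1 : ℝ)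
      rw [div_le_one this]
      nlinarith [sq_nonneg (μ * x - (t * x + 2))]
  refine ⟨hmaps, ?_⟩
  -- `R` is the set where `f` is past its critical point
  have hmon : ∀ x y : Set.Icc (0 : ℝ) 1, x ≤ y → μ * y ≤ t * y + 2 → μ * x ≤ t * x + 2 →
      Set.MapsTo.restrict _ _ _ hmaps x ≤ Set.MapsTo.restrict _ _ _ hmaps y := by
    intro x y hxy hy hx
    have hx0 : (0 : ℝ) ≤ x := x.2.1
    have hy0 : (0 : ℝ) ≤ y := y.2.1
    have hxy' : (x : ℝ) ≤ y := hxy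
    refine fmap_le μ (t * x + 2) (t * y + 2) x y (by positivity) (by positivity) hμ ?_
    apply mul_nonneg
    · nlinarith
    · have := mul_le_mul hx hy (by positivity) (by positivity)
      nlinarith
  have hanti : ∀ x y : Set.Icc (0 : ℝ) 1, x ≤ y → t * y + 2 ≤ μ * y → t * x + 2 ≤ μ * x →
      Set.MapsTo.restrict _ _ _ hmaps y ≤ Set.MapsTo.restrict _ _ _ hmaps x := by
    intro x y hxy hy hx
    have hx0 : (0 : ℝ) ≤ x := x.2.1
    have hy0 : (0 : ℝ) ≤ y := y.2.1
    have hxy' : (x : ℝ) ≤ y := hxy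
    refine fmap_le μ (t * y + 2) (t * x + 2) y x (by positivity) (by positivity) hμ ?_
    apply mul_nonneg_of_nonpos_of_nonpos
    · nlinarith
    · have := mul_le_mul hx hy (by positivity) (by positivity)
      nlinarith
  refine entropy_general _ {x : Set.Icc (0 : ℝ) 1 | t * (x : ℝ) + 2 ≤ μ * (x : ℝ)} ?_ ?_ ?_
  · intro x hx
    have hx : t * (x : ℝ) + 2 ≤ μ * (x : ℝ) := hx
    have hx1 : (x : ℝ) ≤ 1 := x.2.2
    have hx0 : (0 : ℝ) ≤ x := x.2.1
    have hμt : t + 2 ≤ μ := by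
      by_contra hc
      nlinarith
    have hle := hanti x ⟨1, by simp⟩ hx1 (by simpa using hμt) hx
    have hle' : (2 * μ * 1 * (t * 1 + 2) / (μ ^ 2 * 1 ^ 2 + (t * 1 + 2) ^ 2) : ℝ) ≤
      (Set.MapsTo.restrict _ _ _ hmaps x : Set.Icc (0 : ℝ) 1) := hle
    have hfin : 2 ≤ (μ - t) * (2 * μ * 1 * (t * 1 + 2) / (μ ^ 2 * 1 ^ 2 + (t * 1 + 2) ^ 2)) := by
      rw [← mul_div_assoc, le_div_iff₀ (by positivity)]
      obtain ⟨d, rfl⟩ : ∃ d, μ = t + 2 + d := ⟨μ - t - 2, by ring⟩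
      have hd : 0 ≤ d := by linarith
      have h1 : 0 ≤ (t + 2) ^ 2 * d := by positivity
      have h2 : 0 ≤ (t + 1) * d ^ 2 := by positivity
      nlinarith
    have := mul_le_mul_of_nonneg_left hle' (by linarith : 0 ≤ μ - t)
    change t * (_ : ℝ) + 2 ≤ μ * (_ : ℝ)
    linarith
  · intro x hx y hy hxy
    have hx' : μ * ((x : Set.Icc (0 : ℝ) 1) : ℝ) < t * (x : ℝ) + 2 := lt_of_not_ge hx
    have hy' : μ * ((y : Set.Icc (0 : ℝ) 1) : ℝ) < t * (y : ℝ) + 2 := lt_of_not_ge hy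
    exact hmon x y hxy hy'.le hx'.le
  · intro x hx y hy hxy
    exact hanti x y hxy hy hx
end

section
/- Fix μ > 1 and define h_μ : ℝ → ℝ by h_μ(x) = (1/μ)(x + 1/x + 2) (with the convention 1/0 = 0). Let p = 1/(√μ − 1). Then p > 0, h_μ(p) = p, the interval (0,∞) is invariant under h_μ, and for every x > 0 the iterates h_μ^[n](x) converge to p as n → ∞. -/
open Filter

lemma aux_contr_s19 (c q R : ℝ) (hR : 0 ≤ R) : ∃ k : ℝ, 0 ≤ k ∧ k < 1 ∧ ∀ u, |u - q| ≤ R →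
    |(2 * Real.log (Real.exp u + 1) - u - c) - (2 * Real.log (Real.exp q + 1) - q - c)|
      ≤ k * |u - q| := by
  set K := R + |q| with hK
  have hK0 : 0 ≤ K := by positivity
  have hE : 1 ≤ Real.exp K := Real.one_le_exp hK0
  refine ⟨(Real.exp K - 1) / (Real.exp K + 1), div_nonneg (by linarith) (by linarith), ?_, ?_⟩
  · rw [div_lt_one (by linarith)]; linarith
  intro u hu
  have key := Convex.norm_image_sub_le_of_norm_hasDerivWithin_le
    (f := fun u => 2 * Real.log (Real.exp u + 1) - u - c)
    (f' := fun u => 2 * (Real.exp u / (Real.exp u + 1)) - 1)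
    (s := Set.Icc (q - R) (q + R)) (C := (Real.exp K - 1) / (Real.exp K + 1))
    (x := q) (y := u) ?_ ?_ (convex_Icc _ _) ?_ ?_
  · simpa [Real.norm_eq_abs] using key
  · intro x _
    have h1 : HasDerivAt (fun u => Real.exp u + 1) (Real.exp x) x :=
      (Real.hasDerivAt_exp x).add_const 1
    have h2 := h1.log (by positivity)
    exact (((h2.const_mul 2).sub (hasDerivAt_id x)).sub_const c).hasDerivWithinAt
  · intro x hx
    have hq := abs_le.1 (le_refl |q|)
    have h1 : x ≤ K := by linarith [hx.2]
    have h2 : -x ≤ K := by linarith [hx.1]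
    have e1 := Real.exp_le_exp.2 h1
    have e2 := Real.exp_le_exp.2 h2
    have e0 := Real.exp_pos x
    have e3 : 1 ≤ Real.exp K * Real.exp x := by
      have : Real.exp (-x) * Real.exp x = 1 := by rw [← Real.exp_add]; simp
      nlinarith
    have e4 : 2 * (Real.exp x / (Real.exp x + 1)) - 1 = (Real.exp x - 1) / (Real.exp x + 1) := by
      field_simp; ring
    rw [Real.norm_eq_abs, e4, abs_le, ← neg_div, div_le_div_iff₀ (by linarith) (by linarith),
      div_le_div_iff₀ (by linarith) (by linarith)]
    constructor <;> nlinarith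
  · constructor <;> linarith
  · have := abs_le.1 hu
    constructor <;> linarith

/-- For `μ > 1`, the map `x ↦ (1/μ)(x + 1/x + 2)` has the attracting fixed point
`p = 1/(√μ − 1) > 0`, preserves `(0,∞)`, and every orbit starting in `(0,∞)` converges
to `p`. -/
theorem escape_boundary_orbits_converge (μ : ℝ) (hμ : 1 < μ) :
    let h : ℝ → ℝ := fun x => (1 / μ) * (x + 1 / x + 2)
    let p : ℝ := 1 / (Real.sqrt μ - 1)
    0 < p ∧ h p = p ∧ (∀ x : ℝ, 0 < x → 0 < h x) ∧
      (∀ x : ℝ, 0 < x → Tendsto (fun n => h^[n] x) atTop (nhds p)) := by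
  intro h p
  have hs : 1 < Real.sqrt μ := by
    rw [Real.lt_sqrt (by norm_num)]; simpa using hμ
  have hss : Real.sqrt μ ^ 2 = μ := Real.sq_sqrt (by linarith)
  have hp : 0 < p := one_div_pos.2 (by linarith)
  have hfix : h p = p := by
    have hne : Real.sqrt μ - 1 ≠ 0 := by linarith
    have hmu : μ ≠ 0 := by linarith
    simp only [h, p]
    field_simp
    linear_combination hss
  have hpos : ∀ x : ℝ, 0 < x → 0 < h x := by
    intro x hx
    have : 0 < μ := by linarith
    simp only [h]; positivity
  refine ⟨hp, hfix, hpos, ?_⟩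
  have hlog : ∀ x : ℝ, 0 < x → Real.log (h x) =
      2 * Real.log (Real.exp (Real.log x) + 1) - Real.log x - Real.log μ := by
    intro x hx
    have hm : 0 < μ := by linarith
    have : h x = (x + 1) ^ 2 / x / μ := by
      simp only [h]; field_simp; ring
    rw [this, Real.exp_log hx, Real.log_div (by positivity) (by positivity),
      Real.log_div (by positivity) (by positivity), Real.log_pow]
    norm_num
  intro x hx
  obtain ⟨k, hk0, hk1, hk⟩ := aux_contr_s19 (Real.log μ) (Real.log p) |Real.log x - Real.log p|
    (abs_nonneg _)
  have hn : ∀ n : ℕ, 0 < h^[n] x ∧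
      |Real.log (h^[n] x) - Real.log p| ≤ k ^ n * |Real.log x - Real.log p| := by
    intro n
    induction n with
    | zero => simpa using hx
    | succ n ih =>
      obtain ⟨i1, i2⟩ := ih
      rw [Function.iterate_succ_apply']
      refine ⟨hpos _ i1, ?_⟩
      have h3 := hk (Real.log (h^[n] x)) (i2.trans
        (mul_le_of_le_one_left (abs_nonneg _) (pow_le_one₀ hk0 hk1.le)))
      rw [← hlog _ i1, ← hlog _ hp, hfix] at h3
      calc _ ≤ _ := h3
        _ ≤ k * (k ^ n * |Real.log x - Real.log p|) := mul_le_mul_of_nonneg_left i2 hk0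
        _ = _ := by ring
  have ht : Tendsto (fun n => Real.log (h^[n] x)) atTop (nhds (Real.log p)) := by
    rw [tendsto_iff_norm_sub_tendsto_zero]
    refine squeeze_zero (fun _ => norm_nonneg _) (fun n => (hn n).2) ?_
    simpa using (tendsto_pow_atTop_nhds_zero_of_lt_one hk0 hk1).mul_const
      |Real.log x - Real.log p|
  have := (Real.continuous_exp.tendsto _).comp ht
  rw [Real.exp_log hp] at this
  refine this.congr (fun n => ?_)
  exact Real.exp_log (hn n).1
end
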